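/- arXiv:math/9910160 — 2 statements merged into one kernel-verified Lean document; each statement's English description precedes it below -/
import Mathlib

section
/- There exist constants d₁, d₂ > 0 such that for every p with 1 < p ≤ 2: (i) for every n ≥ 1, every continuous f : B_{ℓ_pⁿ} → ℝ with ω₂(f;B_{ℓ_pⁿ}) ≤ 1 admits an affine function φ with sup_{x∈B_{ℓ_pⁿ}} |f(x) − φ(x)| ≤ d₂ (p−1)^{−1} (1 + |log(p−1)|); and (ii) there exist n ≥ 1 and a continuous f : B_{ℓ_pⁿ} → ℝ with ω₂(f;B_{ℓ_pⁿ}) ≤ 1 such that every affine function φ satisfies sup_{x∈B_{ℓ_pⁿ}} |f(x) − φ(x)| ≥ d₁ (p−1)^{−1}. (Theorem 3.8(b): d₁/(p−1) ≤ γ(p) := sup_n w₂(ℓ_pⁿ) ≤ d₂ (p−1)^{−1}(1+|log(p−1)|).) -/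
open Finset

/-- `diffBound m K f c` says that the `m`-th modulus of smoothness of `f` on `K` is at most `c`,
i.e. `|Δ_h^m f(x)| ≤ c` whenever `x, x+h, …, x+mh ∈ K`. -/
def diffBound {E : Type*} [AddCommGroup E] [Module ℝ E] (m : ℕ) (K : Set E) (f : E → ℝ)
    (c : ℝ) : Prop :=
  ∀ x h : E, (∀ j : ℕ, j ≤ m → x + (j : ℝ) • h ∈ K) →
    |∑ j ∈ Finset.range (m + 1), (-1 : ℝ) ^ (m - j) * (m.choose j : ℝ) * f (x + (j : ℝ) • h)| ≤ c

/-- The closed unit ball of `ℓ_pⁿ` (for real `p > 0`). -/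
noncomputable def lpBall (n : ℕ) (p : ℝ) : Set (Fin n → ℝ) := {x | ∑ i, |x i| ^ p ≤ 1}

/-!
Upper bound. Let `μ` be a finitely supported centred distribution on the unit ball. Passing to the
law of the average of two independent copies changes `E f` by at most `δ / 2`, and by Clarkson's
inequality it contracts the dispersion of `μ` by the factor `2 ^ (1 - p)`; so after
`k ≈ 2 / (p - 1)` steps the mean norm is at most `1 / 2`. Up to `δ`, `f` is linear on each ray, and
the directions of the points, weighted by the norms, are centred again. Hence
`sup |E f| ≤ sup |E f| / 2 + O(k δ)`, which bounds `sup |E f|`. A function whose centred averages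
are bounded is close to a linear functional, by the Riesz extension theorem.

Lower bound. On the `ℓ₁`-ball the entropy `-∑ xᵢ log xᵢ` has bounded second differences in every
dimension `n`, but its distance to the affine functions is at least `(log n) / 2`. The `ℓ_p`-ball
lies in the `ℓ₁`-ball of radius `O(1)` as long as `n ≲ exp (1 / (p - 1))`.
-/

open scoped ENNReal

/-- `f` is midpoint-affine on `K` up to an error `δ`: the midpoint form of the bound `ω₂(f; K) ≤ δ`
for convex `K`. -/
def ApproxMidpointAffineOn {E : Type*} [AddCommGroup E] [Module ℝ E] (δ : ℝ) (K : Set E)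
    (f : E → ℝ) : Prop :=
  ∀ x ∈ K, ∀ y ∈ K, |f x + f y - 2 * f (midpoint ℝ x y)| ≤ δ

namespace ApproxMidpointAffineOn

variable {E F : Type*} [AddCommGroup E] [Module ℝ E] [AddCommGroup F] [Module ℝ F]
  {δ : ℝ} {K : Set E} {f : E → ℝ}

theorem mono {K' : Set E} (hf : ApproxMidpointAffineOn δ K f) (hK : K' ⊆ K) :
    ApproxMidpointAffineOn δ K' f :=
  fun x hx y hy => hf x (hK hx) y (hK hy)

theorem const_mul (hf : ApproxMidpointAffineOn δ K f) (c : ℝ) :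
    ApproxMidpointAffineOn (|c| * δ) K (fun x => c * f x) := fun x hx y hy => by
  calc |c * f x + c * f y - 2 * (c * f (midpoint ℝ x y))|
      = |c| * |f x + f y - 2 * f (midpoint ℝ x y)| := by rw [← abs_mul]; ring_nf
    _ ≤ |c| * δ := mul_le_mul_of_nonneg_left (hf x hx y hy) (abs_nonneg c)

theorem comp_affineMap (hf : ApproxMidpointAffineOn δ K f) (g : F →ᵃ[ℝ] E) :
    ApproxMidpointAffineOn δ (g ⁻¹' K) (f ∘ g) := fun x hx y hy => by
  simpa only [Function.comp_apply, AffineMap.map_midpoint] using hf _ hx _ hy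

theorem sub_affineMap (hf : ApproxMidpointAffineOn δ K f) (φ : E →ᵃ[ℝ] ℝ) :
    ApproxMidpointAffineOn δ K (f - φ) := fun x hx y hy => by
  have hmid : φ (midpoint ℝ x y) = 2⁻¹ * (φ x + φ y) := by
    rw [AffineMap.map_midpoint, midpoint_eq_smul_add, invOf_eq_inv, smul_eq_mul]
  convert hf x hx y hy using 2
  simp only [Pi.sub_apply, hmid]
  ring

theorem oddPart (hf : ApproxMidpointAffineOn δ K f) (hK : ∀ x ∈ K, -x ∈ K) :
    ApproxMidpointAffineOn δ K (fun x => (f x - f (-x)) / 2) := fun x hx y hy => by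
  have hneg : midpoint ℝ (-x) (-y) = -midpoint ℝ x y := by
    simp only [midpoint_eq_smul_add, ← neg_add, smul_neg]
  have h₁ := abs_le.mp (hf x hx y hy)
  have h₂ := abs_le.mp (hf _ (hK x hx) _ (hK y hy))
  rw [hneg] at h₂
  exact abs_le.mpr ⟨by linarith, by linarith⟩

end ApproxMidpointAffineOn

theorem diffBound_two_iff_approxMidpointAffineOn {E : Type*} [AddCommGroup E] [Module ℝ E]
    {K : Set E} (hK : Convex ℝ K) {f : E → ℝ} {δ : ℝ} :
    diffBound 2 K f δ ↔ ApproxMidpointAffineOn δ K f := by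
  have midpoint_step (x h : E) : midpoint ℝ x (x + (2 : ℝ) • h) = x + h := by
    rw [midpoint_eq_smul_add, invOf_eq_inv]; module
  have second_difference (x h : E) :
      ∑ j ∈ range 3, (-1 : ℝ) ^ (2 - j) * (Nat.choose 2 j : ℝ) * f (x + (j : ℝ) • h)
        = f x + f (x + (2 : ℝ) • h) - 2 * f (midpoint ℝ x (x + (2 : ℝ) • h)) := by
    rw [midpoint_step]
    simp [sum_range_succ]
    ring
  constructor
  · intro hf x hx y hy
    obtain ⟨h, rfl⟩ : ∃ h : E, y = x + (2 : ℝ) • h := ⟨(2⁻¹ : ℝ) • (y - x), by module⟩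
    rw [← second_difference]
    refine hf x h fun j hj => ?_
    interval_cases j
    · simpa using hx
    · simpa [midpoint_step] using hK.midpoint_mem hx hy
    · simpa using hy
  · intro hf x h hK'
    rw [second_difference]
    exact hf x (by simpa using hK' 0 zero_le_two) _ (by simpa using hK' 2 le_rfl)

theorem two_mul_mem_upperBounds {S : Set ℝ} (hS : BddAbove S) {c : ℝ}
    (h : ∀ B ∈ upperBounds S, B / 2 + c ∈ upperBounds S) : 2 * c ∈ upperBounds S := by
  intro y hy
  have hsup : sSup S ≤ sSup S / 2 + c := csSup_le ⟨y, hy⟩ (h _ fun _ hz => le_csSup hS hz)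
  linarith [le_csSup hS hy]

theorem ApproxMidpointAffineOn.abs_le_of_endpoints_eq_zero {φ : ℝ → ℝ} {δ B : ℝ}
    (hφ : ApproxMidpointAffineOn δ (Set.Icc 0 1) φ) (hB : ∀ r ∈ Set.Icc (0 : ℝ) 1, |φ r| ≤ B)
    (h₀ : φ 0 = 0) (h₁ : φ 1 = 0) {r : ℝ} (hr : r ∈ Set.Icc (0 : ℝ) 1) : |φ r| ≤ δ := by
  have half_step {C s t : ℝ} (hC : |φ s| ≤ C) (hs : s ∈ Set.Icc (0 : ℝ) 1)
      (ht : t ∈ Set.Icc (0 : ℝ) 1) (hφt : φ t = 0) : |φ ((s + t) / 2)| ≤ C / 2 + δ / 2 := by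
    have h := abs_le.mp (hφ s hs t ht)
    rw [midpoint_eq_smul_add, invOf_eq_inv, smul_eq_mul, inv_mul_eq_div, hφt] at h
    have hC' := abs_le.mp hC
    exact abs_le.mpr ⟨by linarith, by linarith⟩
  have key := two_mul_mem_upperBounds (S := (fun r => |φ r|) '' Set.Icc 0 1)
    ⟨B, Set.forall_mem_image.mpr fun _ hs => hB _ hs⟩ (c := δ / 2) fun C hC =>
      Set.forall_mem_image.mpr fun r hr => by
        replace hC (s : ℝ) (hs : s ∈ Set.Icc (0 : ℝ) 1) : |φ s| ≤ C := hC ⟨s, hs, rfl⟩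
        rcases le_total r (1 / 2) with hr' | hr'
        · have hs : 2 * r ∈ Set.Icc (0 : ℝ) 1 := ⟨by linarith [hr.1], by linarith⟩
          simpa using half_step (hC _ hs) hs (Set.left_mem_Icc.mpr zero_le_one) h₀
        · have hs : 2 * r - 1 ∈ Set.Icc (0 : ℝ) 1 := ⟨by linarith, by linarith [hr.2]⟩
          simpa using half_step (hC _ hs) hs (Set.right_mem_Icc.mpr zero_le_one) h₁
  calc |φ r| ≤ 2 * (δ / 2) := key ⟨r, hr, rfl⟩
    _ = δ := by ring

theorem ApproxMidpointAffineOn.abs_apply_smul_sub_le {E : Type*} [AddCommGroup E] [Module ℝ E]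
    {K : Set E} (hK : StarConvex ℝ 0 K) {f : E → ℝ} {δ B : ℝ}
    (hf : ApproxMidpointAffineOn δ K f) (hB : ∀ x ∈ K, |f x| ≤ B) (hf₀ : f 0 = 0) {x : E}
    (hx : x ∈ K) {r : ℝ} (hr : r ∈ Set.Icc (0 : ℝ) 1) : |f (r • x) - r * f x| ≤ δ := by
  have hseg : Set.Icc 0 1 ⊆ (AffineMap.lineMap 0 x : ℝ →ᵃ[ℝ] E) ⁻¹' K := fun s hs => by
    simpa [AffineMap.lineMap_apply] using hK.smul_mem hx hs.1 hs.2
  have hφ := ((hf.comp_affineMap (AffineMap.lineMap 0 x)).sub_affineMap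
    (AffineMap.lineMap 0 (f x))).mono hseg
  have hφ_apply (s : ℝ) :
      (f ∘ (AffineMap.lineMap 0 x : ℝ →ᵃ[ℝ] E) - (AffineMap.lineMap 0 (f x) : ℝ →ᵃ[ℝ] ℝ)) s
        = f (s • x) - s * f x := by
    simp [AffineMap.lineMap_apply]
  rw [← hφ_apply]
  refine hφ.abs_le_of_endpoints_eq_zero (B := B + B) (fun s hs => ?_)
    (by simp [hf₀]) (by simp) hr
  rw [hφ_apply]
  calc |f (s • x) - s * f x| ≤ |f (s • x)| + |s * f x| := abs_sub _ _
    _ ≤ B + B := add_le_add (hB _ (hK.smul_mem hx hs.1 hs.2)) <| by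
      rw [abs_mul, abs_of_nonneg hs.1]
      exact (mul_le_of_le_one_left (abs_nonneg _) hs.2).trans (hB x hx)

theorem norm_piLp_rpow_toReal {ι : Type*} [Fintype ι] {E : ι → Type*}
    [∀ i, SeminormedAddCommGroup (E i)] {p : ℝ≥0∞} [Fact (1 ≤ p)] (hp : p ≠ ∞) (x : PiLp p E) :
    ‖x‖ ^ p.toReal = ∑ i, ‖x i‖ ^ p.toReal := by
  have hp₀ : 0 < p.toReal := ENNReal.toReal_pos (zero_lt_one.trans_le Fact.out).ne' hp
  rw [PiLp.norm_eq_sum hp₀, one_div, Real.rpow_inv_rpow (by positivity) hp₀.ne']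

/-- Clarkson's inequality with exponent `p`: a quantitative `p`-uniform smoothness, which `L_p`
satisfies for `1 ≤ p ≤ 2`. -/
def ClarksonInequality (E : Type*) [SeminormedAddCommGroup E] (p : ℝ) : Prop :=
  ∀ a b : E, ‖a + b‖ ^ p + ‖a - b‖ ^ p ≤ 2 * (‖a‖ ^ p + ‖b‖ ^ p)

namespace ClarksonInequality

theorem of_innerProductSpace {E : Type*} [SeminormedAddCommGroup E] [InnerProductSpace ℝ E]
    {p : ℝ} (hp : 0 ≤ p) (hp2 : p ≤ 2) : ClarksonInequality E p := by
  intro a b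
  have rpow_eq (x : E) : ‖x‖ ^ p = (‖x‖ ^ 2) ^ (p / 2) := by
    rw [← Real.rpow_natCast_mul (norm_nonneg x)]; congr 1; push_cast; ring
  have concave := (Real.concaveOn_rpow (p := p / 2) (by linarith) (by linarith)).2
    (sq_nonneg ‖a + b‖) (sq_nonneg ‖a - b‖) one_half_pos.le one_half_pos.le (add_halves 1)
  have subadditive := Real.rpow_add_le_add_rpow (sq_nonneg ‖a‖) (sq_nonneg ‖b‖)
    (by linarith : 0 ≤ p / 2) (by linarith)
  have parallelogram :
      (1 / 2 : ℝ) • ‖a + b‖ ^ 2 + (1 / 2 : ℝ) • ‖a - b‖ ^ 2 = ‖a‖ ^ 2 + ‖b‖ ^ 2 := by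
    simp only [smul_eq_mul]
    linarith [parallelogram_law_with_norm ℝ a b]
  rw [parallelogram, smul_eq_mul, smul_eq_mul] at concave
  simp only [rpow_eq]
  linarith

theorem piLp {ι : Type*} [Fintype ι] {E : ι → Type*} [∀ i, SeminormedAddCommGroup (E i)]
    {p : ℝ≥0∞} [Fact (1 ≤ p)] (hp : p ≠ ∞) (hE : ∀ i, ClarksonInequality (E i) p.toReal) :
    ClarksonInequality (PiLp p E) p.toReal := by
  intro a b
  simp only [norm_piLp_rpow_toReal hp, ← sum_add_distrib, mul_sum]
  exact sum_le_sum fun i _ => hE i (a i) (b i)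

variable {E : Type*} [SeminormedAddCommGroup E] {p : ℝ}

theorem sum_prod_symmetric_le (hE : ClarksonInequality E p) {κ : Type*} [Fintype κ] {v : κ → ℝ}
    {d : κ → E} (hv : ∀ i, 0 ≤ v i) (hv₁ : ∑ i, v i = 1) (σ : κ ≃ κ) (hvσ : ∀ i, v (σ i) = v i)
    (hdσ : ∀ i, d (σ i) = -d i) :
    ∑ i, ∑ j, v i * v j * ‖d i + d j‖ ^ p ≤ 2 * ∑ i, v i * ‖d i‖ ^ p := by
  have flip : ∑ i, ∑ j, v i * v j * ‖d i - d j‖ ^ p = ∑ i, ∑ j, v i * v j * ‖d i + d j‖ ^ p := by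
    refine sum_congr rfl fun i _ => ?_
    rw [← σ.sum_comp]
    simp only [hvσ, hdσ, sub_neg_eq_add]
  have both : ∑ i, ∑ j, v i * v j * ‖d i + d j‖ ^ p + ∑ i, ∑ j, v i * v j * ‖d i - d j‖ ^ p
      ≤ ∑ i, ∑ j, v i * v j * (2 * (‖d i‖ ^ p + ‖d j‖ ^ p)) := by
    simp only [← sum_add_distrib, ← mul_add]
    exact sum_le_sum fun i _ => sum_le_sum fun j _ =>
      mul_le_mul_of_nonneg_left (hE _ _) (mul_nonneg (hv i) (hv j))
  have split : ∑ i, ∑ j, v i * v j * (2 * (‖d i‖ ^ p + ‖d j‖ ^ p))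
      = 4 * ∑ i, v i * ‖d i‖ ^ p := by
    have expand (i j : κ) : v i * v j * (2 * (‖d i‖ ^ p + ‖d j‖ ^ p))
        = 2 * (v i * ‖d i‖ ^ p * v j + v i * (v j * ‖d j‖ ^ p)) := by ring
    simp only [expand, ← mul_sum, sum_add_distrib, ← sum_mul, hv₁]
    ring
  linarith

end ClarksonInequality

/-- A finitely supported probability distribution on the closed unit ball of `E` with barycentre
`0`. The points need not be distinct, so that the law of an average of independent copies is again
of this form. -/
structure CenteredDist (E : Type*) [SeminormedAddCommGroup E] [NormedSpace ℝ E] where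
  Index : Type
  [fintype : Fintype Index]
  weight : Index → ℝ
  point : Index → E
  weight_nonneg : ∀ i, 0 ≤ weight i
  sum_weight : ∑ i, weight i = 1
  norm_point_le : ∀ i, ‖point i‖ ≤ 1
  sum_weight_smul_point : ∑ i, weight i • point i = 0

namespace CenteredDist

attribute [instance] fintype

variable {E : Type*} [SeminormedAddCommGroup E] [NormedSpace ℝ E] {p : ℝ} {f g : E → ℝ}

/-- The expectation of `f` under `μ`. -/
def expect (μ : CenteredDist E) (f : E → ℝ) : ℝ := ∑ i, μ.weight i * f (μ.point i)

theorem expect_sub (μ : CenteredDist E) : μ.expect (f - g) = μ.expect f - μ.expect g := by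
  simp only [expect, Pi.sub_apply, mul_sub, sum_sub_distrib]

theorem expect_nonneg (μ : CenteredDist E) (hf : ∀ x, 0 ≤ f x) : 0 ≤ μ.expect f :=
  sum_nonneg fun i _ => mul_nonneg (μ.weight_nonneg i) (hf _)

theorem abs_sum_weight_mul_le (μ : CenteredDist E) {v : μ.Index → ℝ} {C : ℝ}
    (hv : ∀ i, |v i| ≤ C) : |∑ i, μ.weight i * v i| ≤ C := by
  calc |∑ i, μ.weight i * v i| ≤ ∑ i, |μ.weight i * v i| := abs_sum_le_sum_abs _ _
    _ ≤ ∑ i, μ.weight i * C := sum_le_sum fun i _ => by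
      rw [abs_mul, abs_of_nonneg (μ.weight_nonneg i)]
      exact mul_le_mul_of_nonneg_left (hv i) (μ.weight_nonneg i)
    _ = C := by rw [← sum_mul, μ.sum_weight, one_mul]

theorem abs_expect_le (μ : CenteredDist E) {C : ℝ} (hf : ∀ x ∈ Metric.closedBall 0 1, |f x| ≤ C) :
    |μ.expect f| ≤ C :=
  μ.abs_sum_weight_mul_le fun i => hf _ (mem_closedBall_zero_iff.mpr (μ.norm_point_le i))

/-- The law of the average of two independent copies of `μ`. -/
noncomputable def average (μ : CenteredDist E) : CenteredDist E where
  Index := μ.Index × μ.Index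
  weight i := μ.weight i.1 * μ.weight i.2
  point i := midpoint ℝ (μ.point i.1) (μ.point i.2)
  weight_nonneg i := mul_nonneg (μ.weight_nonneg _) (μ.weight_nonneg _)
  sum_weight := by simp only [Fintype.sum_prod_type, ← mul_sum, μ.sum_weight, mul_one]
  norm_point_le i := mem_closedBall_zero_iff.mp <| (convex_closedBall 0 1).midpoint_mem
    (mem_closedBall_zero_iff.mpr (μ.norm_point_le _))
    (mem_closedBall_zero_iff.mpr (μ.norm_point_le _))
  sum_weight_smul_point := by
    have expand (i j : μ.Index) : (μ.weight i * μ.weight j) • midpoint ℝ (μ.point i) (μ.point j)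
        = (2⁻¹ : ℝ) • (μ.weight j • μ.weight i • μ.point i
          + μ.weight i • μ.weight j • μ.point j) := by
      rw [midpoint_eq_smul_add, invOf_eq_inv]; module
    simp only [Fintype.sum_prod_type, expand, ← smul_sum, sum_add_distrib,
      μ.sum_weight_smul_point, smul_zero, sum_const_zero, add_zero]
    rw [sum_comm]
    simp only [← smul_sum, μ.sum_weight_smul_point, smul_zero, sum_const_zero]

theorem sum_average_weight_mul (μ : CenteredDist E) (v : μ.Index → ℝ) :
    ∑ i, μ.average.weight i * ((v i.1 + v i.2) / 2) = ∑ i, μ.weight i * v i := by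
  have expand (i j : μ.Index) : μ.weight i * μ.weight j * ((v i + v j) / 2)
      = (μ.weight i * v i * μ.weight j + μ.weight i * (μ.weight j * v j)) / 2 := by ring
  change ∑ i : μ.Index × μ.Index, μ.weight i.1 * μ.weight i.2 * ((v i.1 + v i.2) / 2) = _
  simp only [Fintype.sum_prod_type, expand, ← sum_div, sum_add_distrib, ← mul_sum, ← sum_mul,
    μ.sum_weight]
  ring

theorem abs_expect_sub_expect_average_le (μ : CenteredDist E) {δ : ℝ}
    (hf : ApproxMidpointAffineOn δ (Metric.closedBall 0 1) f) :
    |μ.expect f - μ.average.expect f| ≤ δ / 2 := by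
  rw [expect, ← μ.sum_average_weight_mul, expect, ← sum_sub_distrib]
  simp only [← mul_sub]
  refine μ.average.abs_sum_weight_mul_le fun i => ?_
  have h := abs_le.mp (hf _ (mem_closedBall_zero_iff.mpr (μ.norm_point_le i.1))
    _ (mem_closedBall_zero_iff.mpr (μ.norm_point_le i.2)))
  change |_ - f (midpoint ℝ (μ.point i.1) (μ.point i.2))| ≤ _
  exact abs_le.mpr ⟨by linarith, by linarith⟩

theorem abs_expect_sub_expect_iterate_average_le (μ : CenteredDist E) {δ : ℝ}
    (hf : ApproxMidpointAffineOn δ (Metric.closedBall 0 1) f) (k : ℕ) :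
    |μ.expect f - (average^[k] μ).expect f| ≤ k * (δ / 2) := by
  induction k with
  | zero => simp
  | succ k ih =>
    rw [Function.iterate_succ_apply', Nat.cast_succ, add_one_mul]
    exact (abs_sub_le _ _ _).trans
      (add_le_add ih ((average^[k] μ).abs_expect_sub_expect_average_le hf))

/-- The `p`-th moment of the distance between two independent points with law `μ`. -/
noncomputable def dispersion (μ : CenteredDist E) (p : ℝ) : ℝ :=
  ∑ i : μ.Index × μ.Index, μ.weight i.1 * μ.weight i.2 * ‖μ.point i.1 - μ.point i.2‖ ^ p

theorem dispersion_le (μ : CenteredDist E) (hp : 0 ≤ p) : μ.dispersion p ≤ 2 ^ p := by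
  have hdist (i : μ.average.Index) : |‖μ.point i.1 - μ.point i.2‖ ^ p| ≤ 2 ^ p := by
    rw [abs_of_nonneg (by positivity)]
    have := norm_sub_le (μ.point i.1) (μ.point i.2)
    exact Real.rpow_le_rpow (norm_nonneg _)
      (by linarith [μ.norm_point_le i.1, μ.norm_point_le i.2]) hp
  exact (le_abs_self _).trans (μ.average.abs_sum_weight_mul_le hdist)

-- The difference of two independent averages is half the sum of two independent copies of the
-- symmetric difference of two independent points.
theorem dispersion_average_le (μ : CenteredDist E) (hE : ClarksonInequality E p) :
    μ.average.dispersion p ≤ 2 ^ (1 - p) * μ.dispersion p := by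
  set v : μ.Index × μ.Index → ℝ := fun i => μ.weight i.1 * μ.weight i.2
  set d : μ.Index × μ.Index → E := fun i => μ.point i.1 - μ.point i.2
  have norm_half (a : E) : ‖(2⁻¹ : ℝ) • a‖ ^ p = 2 ^ (-p) * ‖a‖ ^ p := by
    rw [norm_smul, Real.mul_rpow (norm_nonneg _) (norm_nonneg _), Real.norm_of_nonneg (by norm_num),
      Real.inv_rpow zero_le_two, Real.rpow_neg zero_le_two]
  have regroup : μ.average.dispersion p
      = 2 ^ (-p) * ∑ i, ∑ j, v i * v j * ‖d i + d j‖ ^ p := by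
    rw [← Fintype.sum_prod_type', mul_sum,
      ← (Equiv.prodProdProdComm μ.Index μ.Index μ.Index μ.Index).sum_comp]
    refine sum_congr rfl fun i _ => ?_
    change μ.weight i.1.1 * μ.weight i.1.2 * (μ.weight i.2.1 * μ.weight i.2.2) *
      ‖midpoint ℝ (μ.point i.1.1) (μ.point i.1.2) - midpoint ℝ (μ.point i.2.1) (μ.point i.2.2)‖ ^ p
        = 2 ^ (-p) * (μ.weight i.1.1 * μ.weight i.2.1 * (μ.weight i.1.2 * μ.weight i.2.2) *
      ‖(μ.point i.1.1 - μ.point i.2.1) + (μ.point i.1.2 - μ.point i.2.2)‖ ^ p)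
    rw [← vsub_eq_sub (midpoint ℝ _ _), midpoint_vsub_midpoint, midpoint_eq_smul_add, invOf_eq_inv,
      norm_half, vsub_eq_sub, vsub_eq_sub]
    ring
  have symmetric := hE.sum_prod_symmetric_le (v := v) (d := d) μ.average.weight_nonneg
    μ.average.sum_weight (Equiv.prodComm _ _) (fun i => mul_comm _ _)
    (fun i => (neg_sub _ _).symm)
  calc μ.average.dispersion p ≤ 2 ^ (-p) * (2 * ∑ i, v i * ‖d i‖ ^ p) := by
        rw [regroup]; gcongr
    _ = 2 ^ (1 - p) * μ.dispersion p := by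
        rw [sub_eq_add_neg, Real.rpow_add zero_lt_two, Real.rpow_one, dispersion]
        ring

theorem dispersion_iterate_average_le (μ : CenteredDist E) (hE : ClarksonInequality E p) (k : ℕ) :
    (average^[k] μ).dispersion p ≤ (2 ^ (1 - p)) ^ k * μ.dispersion p := by
  induction k with
  | zero => simp
  | succ k ih =>
    rw [Function.iterate_succ_apply', pow_succ', mul_assoc]
    exact ((average^[k] μ).dispersion_average_le hE).trans (by gcongr)

theorem expect_norm_rpow_le_dispersion (μ : CenteredDist E) (hp : 1 ≤ p) :
    μ.expect (fun x => ‖x‖ ^ p) ≤ μ.dispersion p := by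
  have norm_le (i : μ.Index) :
      ‖μ.point i‖ ≤ ∑ j, μ.weight j * ‖μ.point i - μ.point j‖ := by
    have average_sub : ∑ j, μ.weight j • (μ.point i - μ.point j) = μ.point i := by
      simp only [smul_sub, sum_sub_distrib, ← sum_smul, μ.sum_weight, one_smul,
        μ.sum_weight_smul_point, sub_zero]
    calc ‖μ.point i‖ = ‖∑ j, μ.weight j • (μ.point i - μ.point j)‖ := by rw [average_sub]
      _ ≤ ∑ j, ‖μ.weight j • (μ.point i - μ.point j)‖ := norm_sum_le _ _
      _ = ∑ j, μ.weight j * ‖μ.point i - μ.point j‖ := by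
        simp only [norm_smul, Real.norm_of_nonneg (μ.weight_nonneg _)]
  rw [dispersion, Fintype.sum_prod_type]
  simp only [mul_assoc, ← mul_sum]
  refine sum_le_sum fun i _ => mul_le_mul_of_nonneg_left ?_ (μ.weight_nonneg i)
  calc ‖μ.point i‖ ^ p ≤ (∑ j, μ.weight j * ‖μ.point i - μ.point j‖) ^ p :=
        Real.rpow_le_rpow (norm_nonneg _) (norm_le i) (zero_le_one.trans hp)
    _ ≤ ∑ j, μ.weight j * ‖μ.point i - μ.point j‖ ^ p :=
        Real.rpow_arith_mean_le_arith_mean_rpow _ _ _ (fun j _ => μ.weight_nonneg j) μ.sum_weight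
          (fun _ _ => norm_nonneg _) hp

theorem expect_norm_rpow_le (μ : CenteredDist E) (hp : 1 ≤ p) :
    (μ.expect norm) ^ p ≤ μ.expect (fun x => ‖x‖ ^ p) :=
  Real.rpow_arith_mean_le_arith_mean_rpow _ _ _ (fun i _ => μ.weight_nonneg i) μ.sum_weight
    (fun _ _ => norm_nonneg _) hp

theorem expect_norm_iterate_average_le (μ : CenteredDist E) (hE : ClarksonInequality E p)
    (hp : 1 < p) {k : ℕ} (hk : 2 * p ≤ (p - 1) * k) : (average^[k] μ).expect norm ≤ 1 / 2 := by
  have hp₀ : 0 < p := one_pos.trans hp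
  have hν : ((average^[k] μ).expect norm) ^ p ≤ (1 / 2) ^ p := by
    calc ((average^[k] μ).expect norm) ^ p
        ≤ (average^[k] μ).dispersion p :=
          ((average^[k] μ).expect_norm_rpow_le hp.le).trans
            ((average^[k] μ).expect_norm_rpow_le_dispersion hp.le)
      _ ≤ (2 ^ (1 - p)) ^ k * 2 ^ p :=
          (μ.dispersion_iterate_average_le hE k).trans (by gcongr; exact μ.dispersion_le hp₀.le)
      _ = 2 ^ ((1 - p) * k + p) := by
          rw [← Real.rpow_mul_natCast zero_le_two, Real.rpow_add zero_lt_two]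
      _ ≤ 2 ^ (-p) := Real.rpow_le_rpow_of_exponent_le one_le_two (by linarith)
      _ = (1 / 2) ^ p := by rw [one_div, Real.inv_rpow zero_le_two, Real.rpow_neg zero_le_two]
  exact (Real.rpow_le_rpow_iff ((average^[k] μ).expect_nonneg norm_nonneg) (by norm_num) hp₀).mp hν

/-- The distribution obtained by normalising nonnegative weights `w` on points `z` of the unit
ball. -/
noncomputable def ofWeights {ι : Type} [Fintype ι] {w : ι → ℝ} {z : ι → E} (hw : ∀ i, 0 ≤ w i)
    (hpos : 0 < ∑ i, w i) (hz : ∀ i, ‖z i‖ ≤ 1) (hwz : ∑ i, w i • z i = 0) : CenteredDist E where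
  Index := ι
  weight i := (∑ j, w j)⁻¹ * w i
  point := z
  weight_nonneg i := mul_nonneg (inv_nonneg.mpr hpos.le) (hw i)
  sum_weight := by rw [← mul_sum, inv_mul_cancel₀ hpos.ne']
  norm_point_le := hz
  sum_weight_smul_point := by simp only [mul_smul, ← smul_sum, hwz, smul_zero]

theorem abs_sum_mul_le_of_forall_abs_expect_le {D : ℝ} (hD : ∀ μ : CenteredDist E, |μ.expect f| ≤ D)
    {ι : Type} [Fintype ι] {w : ι → ℝ} {z : ι → E} (hw : ∀ i, 0 ≤ w i) (hz : ∀ i, ‖z i‖ ≤ 1)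
    (hwz : ∑ i, w i • z i = 0) : |∑ i, w i * f (z i)| ≤ (∑ i, w i) * D := by
  rcases (sum_nonneg fun i _ => hw i : 0 ≤ ∑ i, w i).eq_or_lt with h₀ | hpos
  · have hw₀ := (sum_eq_zero_iff_of_nonneg fun i _ => hw i).mp h₀.symm
    rw [← h₀, zero_mul, sum_eq_zero fun i hi => by rw [hw₀ i hi, zero_mul], abs_zero]
  · have hexpect : (ofWeights hw hpos hz hwz).expect f = (∑ i, w i)⁻¹ * ∑ i, w i * f (z i) := by
      rw [mul_sum]
      exact sum_congr rfl fun i _ => mul_assoc _ _ _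
    have h := hD (ofWeights hw hpos hz hwz)
    rwa [hexpect, abs_mul, abs_of_pos (inv_pos.mpr hpos), inv_mul_le_iff₀ hpos] at h

end CenteredDist

section Radial

variable {E : Type*} [NormedAddCommGroup E] [NormedSpace ℝ E] {f : E → ℝ} {δ B p : ℝ}

theorem norm_normalize_le_one (x : E) : ‖NormedSpace.normalize x‖ ≤ 1 := by
  rw [NormedSpace.normalize, norm_smul, norm_inv, norm_norm]
  exact inv_mul_le_one

/-- The function that is linear on each ray from `0` and agrees with `f` on the unit sphere. -/
noncomputable def radialExtension (f : E → ℝ) (x : E) : ℝ := ‖x‖ * f (NormedSpace.normalize x)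

theorem ApproxMidpointAffineOn.abs_sub_radialExtension_le
    (hf : ApproxMidpointAffineOn δ (Metric.closedBall 0 1) f)
    (hB : ∀ x ∈ Metric.closedBall 0 1, |f x| ≤ B) (hf₀ : f 0 = 0) {x : E}
    (hx : x ∈ Metric.closedBall 0 1) : |f x - radialExtension f x| ≤ δ := by
  have h := hf.abs_apply_smul_sub_le
    ((convex_closedBall 0 1).starConvex (Metric.mem_closedBall_self zero_le_one)) hB hf₀
    (mem_closedBall_zero_iff.mpr (norm_normalize_le_one x))
    ⟨norm_nonneg x, mem_closedBall_zero_iff.mp hx⟩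
  rwa [NormedSpace.norm_smul_normalize] at h

namespace CenteredDist

theorem abs_expect_radialExtension_le {D : ℝ} (hD : ∀ μ : CenteredDist E, |μ.expect f| ≤ D)
    (ν : CenteredDist E) : |ν.expect (radialExtension f)| ≤ ν.expect norm * D := by
  have h := abs_sum_mul_le_of_forall_abs_expect_le hD
    (w := fun i => ν.weight i * ‖ν.point i‖) (z := fun i => NormedSpace.normalize (ν.point i))
    (fun i => mul_nonneg (ν.weight_nonneg i) (norm_nonneg _))
    (fun i => norm_normalize_le_one _)
    (by simp only [mul_smul, NormedSpace.norm_smul_normalize, ν.sum_weight_smul_point])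
  simpa only [expect, radialExtension, mul_assoc] using h

-- If `D` bounds all `|μ.expect f|`, then averaging `μ` until its mean norm is at most `1 / 2`, and
-- replacing `f` by its radial extension, yields the bound `D / 2 + (k / 2 + 1) * δ`.
theorem abs_expect_le_of_approxMidpointAffineOn (hE : ClarksonInequality E p)
    (hp : 1 < p) (hB : ∀ x ∈ Metric.closedBall 0 1, |f x| ≤ B) (hf₀ : f 0 = 0)
    (hf : ApproxMidpointAffineOn δ (Metric.closedBall 0 1) f) {k : ℕ}
    (hk : 2 * p ≤ (p - 1) * k) (μ : CenteredDist E) : |μ.expect f| ≤ (k + 2) * δ := by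
  have radial_error (ν : CenteredDist E) :
      |ν.expect f - ν.expect (radialExtension f)| ≤ δ := by
    rw [← ν.expect_sub]
    exact ν.abs_expect_le fun x hx => hf.abs_sub_radialExtension_le hB hf₀ hx
  have key := two_mul_mem_upperBounds (S := Set.range fun ν : CenteredDist E => |ν.expect f|)
    ⟨B, Set.forall_mem_range.mpr fun ν => ν.abs_expect_le hB⟩ (c := (k / 2 + 1) * δ) fun D hD =>
      Set.forall_mem_range.mpr fun ν => by
        have hD' (ν : CenteredDist E) : |ν.expect f| ≤ D := hD ⟨ν, rfl⟩
        have hD₀ : 0 ≤ D := (abs_nonneg _).trans (hD' ν)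
        have h_avg := abs_le.mp (ν.abs_expect_sub_expect_iterate_average_le hf k)
        have h_radial := abs_le.mp (radial_error (average^[k] ν))
        have h_half := abs_le.mp ((abs_expect_radialExtension_le hD' (average^[k] ν)).trans
          (mul_le_mul_of_nonneg_right (ν.expect_norm_iterate_average_le hE hp hk) hD₀))
        exact abs_le.mpr ⟨by linarith, by linarith⟩
  calc |μ.expect f| ≤ 2 * ((k / 2 + 1) * δ) := key ⟨μ, rfl⟩
    _ = (k + 2) * δ := by ring

end CenteredDist

end Radial

theorem nonneg_of_mem_hull_graph {E : Type*} [AddCommGroup E] [Module ℝ E] {K : Set E} {q : E → ℝ}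
    (hq : ∀ (n : ℕ) (w : Fin n → ℝ) (z : Fin n → E), (∀ i, 0 ≤ w i) → (∀ i, z i ∈ K) →
      ∑ i, w i • z i = 0 → 0 ≤ ∑ i, w i * q (z i))
    {t : ℝ} (ht : ((0 : E), t) ∈ PointedCone.hull ℝ ((fun x => (x, q x)) '' K)) : 0 ≤ t := by
  obtain ⟨n, w, v, hsum⟩ := Submodule.mem_span_set'.mp ht
  choose z hz hzv using fun i => (v i).2
  have hsum' : ∑ i, ((w i : ℝ) • z i, (w i : ℝ) * q (z i)) = (0, t) := by
    rw [← hsum]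
    exact sum_congr rfl fun i _ => by rw [← hzv]; rfl
  have h_fst : ∑ i, (w i : ℝ) • z i = 0 := by
    simpa [Prod.fst_sum] using congrArg Prod.fst hsum'
  have h_snd : ∑ i, (w i : ℝ) * q (z i) = t := by
    simpa [Prod.snd_sum] using congrArg Prod.snd hsum'
  exact (hq n _ z (fun i => (w i).2) hz h_fst).trans_eq h_snd

-- Riesz extension of `(0, t) ↦ t` from `{0} × ℝ`, with respect to the cone generated by the graph
-- of `q` over `K`.
theorem exists_linearMap_le_of_forall_sum_nonneg {E : Type*} [AddCommGroup E] [Module ℝ E]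
    {K : Set E} (hK : Absorbent ℝ K) {q : E → ℝ}
    (hq : ∀ (n : ℕ) (w : Fin n → ℝ) (z : Fin n → E), (∀ i, 0 ≤ w i) → (∀ i, z i ∈ K) →
      ∑ i, w i • z i = 0 → 0 ≤ ∑ i, w i * q (z i)) :
    ∃ L : E →ₗ[ℝ] ℝ, ∀ x ∈ K, L x ≤ q x := by
  set C : PointedCone ℝ (E × ℝ) := PointedCone.hull ℝ ((fun x => (x, q x)) '' K)
  have graph_mem {x : E} (hx : x ∈ K) : (x, q x) ∈ C := Submodule.subset_span ⟨x, hx, rfl⟩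
  obtain ⟨g, hg_vertical, hg_nonneg⟩ := riesz_extension C
    ⟨LinearMap.ker (LinearMap.fst ℝ E ℝ), (LinearMap.snd ℝ E ℝ).comp (Submodule.subtype _)⟩
    (by
      rintro ⟨⟨x, t⟩, rfl : x = 0⟩ hxt
      exact nonneg_of_mem_hull_graph hq hxt)
    (by
      rintro ⟨y, s⟩
      obtain ⟨r, hr⟩ := absorbs_iff_norm.mp (hK y)
      obtain ⟨z, hz, rfl⟩ := hr |r| (by rw [norm_abs_eq_norm]; exact le_abs_self r) rfl
      refine ⟨⟨(0, |r| * q z - s), by simp⟩, ?_⟩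
      simpa using C.smul_mem (abs_nonneg r) (graph_mem hz))
  refine ⟨-(g ∘ₗ LinearMap.inl ℝ E ℝ), fun x hx => ?_⟩
  have h_vertical : g (0, q x) = q x := hg_vertical ⟨(0, q x), by simp⟩
  have h_graph : 0 ≤ g ((x, 0) + (0, q x)) := by simpa using hg_nonneg _ (graph_mem hx)
  rw [map_add, h_vertical] at h_graph
  simpa using by linarith

section LinearApproximation

variable {E : Type*} [NormedAddCommGroup E] [NormedSpace ℝ E] {f : E → ℝ} {δ B p : ℝ}

theorem exists_linearMap_abs_sub_le_of_odd {D : ℝ} (hodd : ∀ x, f (-x) = -f x)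
    (hD : ∀ μ : CenteredDist E, |μ.expect f| ≤ D) :
    ∃ L : E →ₗ[ℝ] ℝ, ∀ x ∈ Metric.closedBall 0 1, |f x - L x| ≤ D := by
  have hK : Absorbent ℝ (Metric.closedBall (0 : E) 1) :=
    absorbent_nhds_zero (Metric.closedBall_mem_nhds 0 one_pos)
  obtain ⟨L, hL⟩ := exists_linearMap_le_of_forall_sum_nonneg hK (q := fun x => f x + D)
    fun n w z hw hz hwz => by
      have h := CenteredDist.abs_sum_mul_le_of_forall_abs_expect_le hD hw
        (fun i => mem_closedBall_zero_iff.mp (hz i)) hwz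
      simp only [mul_add, sum_add_distrib, ← sum_mul]
      linarith [neg_abs_le (∑ i, w i * f (z i))]
  refine ⟨L, fun x hx => ?_⟩
  have h_pos := hL x hx
  have h_neg := hL (-x) (by simpa using hx)
  rw [hodd, map_neg] at h_neg
  exact abs_le.mpr ⟨by linarith, by linarith⟩

theorem exists_linearMap_abs_sub_add_le (hE : ClarksonInequality E p) (hp : 1 < p)
    (hB : ∀ x ∈ Metric.closedBall 0 1, |f x| ≤ B)
    (hf : ApproxMidpointAffineOn δ (Metric.closedBall 0 1) f) :
    ∃ L : E →ₗ[ℝ] ℝ, ∀ x ∈ Metric.closedBall 0 1,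
      |f x - (f 0 + L x)| ≤ (2 * (p - 1)⁻¹ + 6) * δ := by
  have hp₁ : 0 < p - 1 := sub_pos.mpr hp
  have hK (x : E) (hx : x ∈ Metric.closedBall (0 : E) 1) : -x ∈ Metric.closedBall (0 : E) 1 := by
    simpa using hx
  set k := ⌈2 * (p - 1)⁻¹ + 2⌉₊
  have hk : 2 * p ≤ (p - 1) * k := by
    calc 2 * p = (p - 1) * (2 * (p - 1)⁻¹ + 2) := by field_simp; ring
      _ ≤ (p - 1) * k := by gcongr; exact Nat.le_ceil _
  have hk' : (k : ℝ) ≤ 2 * (p - 1)⁻¹ + 3 := by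
    linarith [Nat.ceil_lt_add_one (by positivity : 0 ≤ 2 * (p - 1)⁻¹ + 2)]
  have hδ : 0 ≤ δ := (abs_nonneg _).trans
    (hf 0 (Metric.mem_closedBall_self zero_le_one) 0 (Metric.mem_closedBall_self zero_le_one))
  obtain ⟨L, hL⟩ := exists_linearMap_abs_sub_le_of_odd (f := fun x => (f x - f (-x)) / 2)
    (fun x => by rw [neg_neg]; ring)
    (CenteredDist.abs_expect_le_of_approxMidpointAffineOn hE hp (B := B)
      (fun x hx => by
        have h₁ := abs_le.mp (hB x hx)
        have h₂ := abs_le.mp (hB _ (hK x hx))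
        exact abs_le.mpr ⟨by linarith, by linarith⟩)
      (by simp) (hf.oddPart hK) hk)
  refine ⟨L, fun x hx => ?_⟩
  have h_odd := abs_le.mp (hL x hx)
  have h_even := hf x hx (-x) (hK x hx)
  rw [midpoint_self_neg] at h_even
  have h_even' := abs_le.mp h_even
  have hkδ : (k + 2) * δ ≤ (2 * (p - 1)⁻¹ + 5) * δ :=
    mul_le_mul_of_nonneg_right (by linarith) hδ
  exact abs_le.mpr ⟨by linarith, by linarith⟩

end LinearApproximation

section LpBall

variable {n : ℕ} {p : ℝ}

theorem lpBall_eq_preimage_closedBall [Fact (1 ≤ ENNReal.ofReal p)] :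
    lpBall n p = WithLp.toLp (ENNReal.ofReal p) ⁻¹'
      Metric.closedBall (0 : PiLp (ENNReal.ofReal p) fun _ : Fin n => ℝ) 1 := by
  have hp : 0 < p := ENNReal.ofReal_pos.mp (zero_lt_one.trans_le Fact.out)
  ext x
  have h := norm_piLp_rpow_toReal ENNReal.ofReal_ne_top (WithLp.toLp (ENNReal.ofReal p) x)
  rw [ENNReal.toReal_ofReal hp.le] at h
  rw [Set.mem_preimage, mem_closedBall_zero_iff,
    ← Real.rpow_le_rpow_iff (norm_nonneg _) zero_le_one hp, h, Real.one_rpow]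
  rfl

theorem convex_lpBall (hp : 1 ≤ p) : Convex ℝ (lpBall n p) := by
  have : Fact (1 ≤ ENNReal.ofReal p) := ⟨ENNReal.one_le_ofReal.mpr hp⟩
  rw [lpBall_eq_preimage_closedBall]
  exact (convex_closedBall _ _).linear_preimage
    (WithLp.linearEquiv (ENNReal.ofReal p) ℝ (Fin n → ℝ)).symm.toLinearMap

theorem isCompact_lpBall (hp : 1 ≤ p) : IsCompact (lpBall n p) := by
  have : Fact (1 ≤ ENNReal.ofReal p) := ⟨ENNReal.one_le_ofReal.mpr hp⟩
  rw [lpBall_eq_preimage_closedBall]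
  exact (PiLp.homeomorph (ENNReal.ofReal p) fun _ : Fin n => ℝ).symm.isCompact_preimage.mpr
    (isCompact_closedBall _ _)

theorem stdSimplex_subset_lpBall (hp : 1 ≤ p) : stdSimplex ℝ (Fin n) ⊆ lpBall n p := by
  intro x hx
  calc ∑ i, |x i| ^ p ≤ ∑ i, x i := sum_le_sum fun i _ => by
        rw [abs_of_nonneg (hx.1 i)]
        exact Real.rpow_le_self_of_le_one (hx.1 i) (mem_Icc_of_mem_stdSimplex hx i).2 hp
    _ = 1 := hx.2

theorem sum_abs_le_of_mem_lpBall (hp : 1 ≤ p) {R : ℝ} (hR : 1 ≤ R)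
    (hn : (n : ℝ) ^ (p - 1) ≤ R) {x : Fin n → ℝ} (hx : x ∈ lpBall n p) : ∑ i, |x i| ≤ R := by
  by_contra! hlt
  refine hlt.not_ge ?_
  calc ∑ i, |x i| ≤ (∑ i, |x i|) ^ p := Real.self_le_rpow_of_one_le (hR.trans hlt.le) hp
    _ ≤ (n : ℝ) ^ (p - 1) * ∑ i, |x i| ^ p := by
        simpa using Real.rpow_sum_le_const_mul_sum_rpow univ x hp
    _ ≤ (n : ℝ) ^ (p - 1) := mul_le_of_le_one_right (by positivity) hx
    _ ≤ R := hn

theorem exists_affine_abs_sub_le_of_diffBound_two {f : (Fin n → ℝ) → ℝ} {B δ : ℝ}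
    (hp : 1 < p) (hp2 : p ≤ 2) (hB : ∀ x ∈ lpBall n p, |f x| ≤ B)
    (hf : diffBound 2 (lpBall n p) f δ) :
    ∃ (c : ℝ) (a : Fin n → ℝ), ∀ x ∈ lpBall n p,
      |f x - (c + ∑ i, a i * x i)| ≤ (2 * (p - 1)⁻¹ + 6) * δ := by
  have : Fact (1 ≤ ENNReal.ofReal p) := ⟨ENNReal.one_le_ofReal.mpr hp.le⟩
  have toReal_p : (ENNReal.ofReal p).toReal = p := ENNReal.toReal_ofReal (by linarith)
  rw [diffBound_two_iff_approxMidpointAffineOn (convex_lpBall hp.le)] at hf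
  rw [lpBall_eq_preimage_closedBall] at hB hf ⊢
  set e := WithLp.linearEquiv (ENNReal.ofReal p) ℝ (Fin n → ℝ)
  have clarkson : ClarksonInequality (PiLp (ENNReal.ofReal p) fun _ : Fin n => ℝ) p := by
    have h := ClarksonInequality.piLp (p := ENNReal.ofReal p) (E := fun _ : Fin n => ℝ)
      ENNReal.ofReal_ne_top fun _ => .of_innerProductSpace (by positivity) (by rwa [toReal_p])
    rwa [toReal_p] at h
  obtain ⟨L, hL⟩ := exists_linearMap_abs_sub_add_le clarkson hp (f := f ∘ e)
    (fun x hx => hB _ hx) (hf.comp_affineMap e.toLinearMap.toAffineMap)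
  refine ⟨f 0, fun i => L (e.symm (Pi.single i 1)), fun x hx => ?_⟩
  have coordinates : L (e.symm x) = ∑ i, L (e.symm (Pi.single i 1)) * x i := by
    conv_lhs => rw [pi_eq_sum_univ' x]
    simp only [map_sum, map_smul, smul_eq_mul, mul_comm]
  rw [← coordinates]
  exact hL (e.symm x) hx

end LpBall

section Entropy

theorem abs_negMulLog_le_one {s : ℝ} (hs : |s| ≤ 1) : |Real.negMulLog s| ≤ 1 := by
  rcases eq_or_ne s 0 with rfl | hs₀
  · simp
  · have h := Real.abs_log_mul_self_lt |s| (abs_pos.mpr hs₀) hs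
    rw [Real.log_abs, abs_mul, abs_abs] at h
    rw [Real.negMulLog, abs_mul, abs_neg, mul_comm]
    exact h.le

-- Rescaling to `|a| + |b| = 1` adds a linear term to `negMulLog`, which the second difference
-- annihilates.
theorem abs_negMulLog_add_sub_two_mul_half_le (a b : ℝ) :
    |Real.negMulLog a + Real.negMulLog b - 2 * Real.negMulLog ((a + b) / 2)|
      ≤ 4 * (|a| + |b|) := by
  rcases (by positivity : 0 ≤ |a| + |b|).eq_or_lt with h₀ | hs
  · obtain ⟨rfl, rfl⟩ : a = 0 ∧ b = 0 := by
      simpa using (add_eq_zero_iff_of_nonneg (abs_nonneg a) (abs_nonneg b)).mp h₀.symm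
    simp
  obtain ⟨s, hs_def⟩ : ∃ s, s = |a| + |b| := ⟨_, rfl⟩
  rw [← hs_def] at hs ⊢
  obtain ⟨u, rfl⟩ : ∃ u, a = s * u := ⟨a / s, by field_simp⟩
  obtain ⟨v, rfl⟩ : ∃ v, b = s * v := ⟨b / s, by field_simp⟩
  have unit : |u| + |v| = 1 := by
    rw [abs_mul, abs_mul, ← mul_add, abs_of_pos hs] at hs_def
    exact mul_left_cancel₀ hs.ne' (by rw [← hs_def, mul_one])
  have hmid : |(u + v) / 2| ≤ 1 := by
    rw [abs_div, abs_two]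
    linarith [abs_add_le u v]
  have homogeneity : Real.negMulLog (s * u) + Real.negMulLog (s * v)
        - 2 * Real.negMulLog ((s * u + s * v) / 2)
      = s * (Real.negMulLog u + Real.negMulLog v - 2 * Real.negMulLog ((u + v) / 2)) := by
    rw [← mul_add, mul_div_assoc]
    simp only [Real.negMulLog_mul]
    ring
  have hu := abs_le.mp (abs_negMulLog_le_one (by linarith [abs_nonneg v] : |u| ≤ 1))
  have hv := abs_le.mp (abs_negMulLog_le_one (by linarith [abs_nonneg u] : |v| ≤ 1))
  have hm := abs_le.mp (abs_negMulLog_le_one hmid)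
  rw [homogeneity, abs_mul, abs_of_pos hs, mul_comm]
  exact mul_le_mul_of_nonneg_right (abs_le.mpr ⟨by linarith, by linarith⟩) hs.le

variable {ι : Type*} [Fintype ι]

/-- The Shannon entropy `-∑ xᵢ log xᵢ`, for arbitrary real vectors: in `Real.log` the sign of the
argument is ignored. -/
noncomputable def shannonEntropy (x : ι → ℝ) : ℝ := ∑ i, Real.negMulLog (x i)

theorem continuous_shannonEntropy : Continuous (shannonEntropy : (ι → ℝ) → ℝ) :=
  continuous_finsetSum _ fun i _ => Real.continuous_negMulLog.comp (continuous_apply i)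

theorem approxMidpointAffineOn_shannonEntropy (R : ℝ) :
    ApproxMidpointAffineOn (8 * R) {x : ι → ℝ | ∑ i, |x i| ≤ R} shannonEntropy := by
  intro x hx y hy
  calc |shannonEntropy x + shannonEntropy y - 2 * shannonEntropy (midpoint ℝ x y)|
      = |∑ i, (Real.negMulLog (x i) + Real.negMulLog (y i)
          - 2 * Real.negMulLog ((x i + y i) / 2))| := by
        simp only [shannonEntropy, sum_sub_distrib, sum_add_distrib, mul_sum, pi_midpoint_apply,
          midpoint_eq_smul_add, invOf_eq_inv, smul_eq_mul, inv_mul_eq_div]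
    _ ≤ ∑ i, 4 * (|x i| + |y i|) := (abs_sum_le_sum_abs _ _).trans
        (sum_le_sum fun i _ => abs_negMulLog_add_sub_two_mul_half_le _ _)
    _ = 4 * (∑ i, |x i| + ∑ i, |y i|) := by rw [← mul_sum, sum_add_distrib]
    _ ≤ 8 * R := by linarith [hx.out, hy.out]

-- The entropy vanishes at the vertices of the simplex and is `log (card ι)` at their barycentre.
theorem exists_mem_stdSimplex_le_abs_shannonEntropy_sub [Nonempty ι] (c : ℝ) (a : ι → ℝ) :
    ∃ x ∈ stdSimplex ℝ ι,
      Real.log (Fintype.card ι) / 2 ≤ |shannonEntropy x - (c + ∑ i, a i * x i)| := by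
  classical
  by_contra! h
  set N := (Fintype.card ι : ℝ) with hN
  have hN₀ : 0 < N := Nat.cast_pos.mpr Fintype.card_pos
  have at_vertex (i : ι) : |c + a i| < Real.log N / 2 := by
    have entropy_single : shannonEntropy (Pi.single i 1 : ι → ℝ) = 0 :=
      sum_eq_zero fun j _ => by rcases eq_or_ne j i with rfl | hj <;> simp [*]
    rw [← abs_neg, neg_add_rev]
    simpa [entropy_single, Pi.single_apply] using h _ (single_mem_stdSimplex ℝ i)
  have at_barycenter := h (fun _ => N⁻¹) ⟨fun _ => by positivity, by simp [hN₀.ne', ← hN]⟩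
  have entropy_barycenter : shannonEntropy (fun _ : ι => N⁻¹) = Real.log N := by
    simp [shannonEntropy, Real.negMulLog, ← hN, hN₀.ne']
  have vertex_sum : ∑ i, (c + a i) = N * (c + ∑ i, a i * N⁻¹) := by
    rw [sum_add_distrib, ← sum_mul, sum_const, card_univ, nsmul_eq_mul, ← hN]
    field_simp
  have vertex_sum_lt : N * (c + ∑ i, a i * N⁻¹) < N * (Real.log N / 2) := by
    calc N * (c + ∑ i, a i * N⁻¹) = ∑ i, (c + a i) := vertex_sum.symm
      _ < ∑ _i : ι, Real.log N / 2 :=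
        sum_lt_sum_of_nonempty univ_nonempty fun i _ => (abs_lt.mp (at_vertex i)).2
      _ = N * (Real.log N / 2) := by rw [sum_const, card_univ, nsmul_eq_mul]
  rw [entropy_barycenter] at at_barycenter
  linarith [lt_of_mul_lt_mul_left vertex_sum_lt hN₀.le, (abs_lt.mp at_barycenter).2]

end Entropy

section LowerBound

variable {n : ℕ} {p : ℝ}

theorem exists_continuous_diffBound_two_le_abs_sub_affine [NeZero n] (hp : 1 ≤ p) {R : ℝ}
    (hR : 1 ≤ R) (hn : (n : ℝ) ^ (p - 1) ≤ R) :
    ∃ f : (Fin n → ℝ) → ℝ, Continuous f ∧ diffBound 2 (lpBall n p) f 1 ∧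
      ∀ (c : ℝ) (a : Fin n → ℝ), ∃ x ∈ lpBall n p,
        Real.log n / (16 * R) ≤ |f x - (c + ∑ i, a i * x i)| := by
  have hR₀ : 0 < 8 * R := by linarith
  refine ⟨fun x => (8 * R)⁻¹ * shannonEntropy x, continuous_shannonEntropy.const_mul _, ?_,
    fun c a => ?_⟩
  · rw [diffBound_two_iff_approxMidpointAffineOn (convex_lpBall hp)]
    have h := ((approxMidpointAffineOn_shannonEntropy R).mono
      fun x hx => sum_abs_le_of_mem_lpBall hp hR hn hx).const_mul (8 * R)⁻¹
    rwa [abs_of_pos (inv_pos.mpr hR₀), inv_mul_cancel₀ hR₀.ne'] at h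
  · obtain ⟨x, hx, hle⟩ :=
      exists_mem_stdSimplex_le_abs_shannonEntropy_sub (8 * R * c) (fun i => 8 * R * a i)
    refine ⟨x, stdSimplex_subset_lpBall hp hx, ?_⟩
    rw [Fintype.card_fin] at hle
    calc Real.log n / (16 * R) = (8 * R)⁻¹ * (Real.log n / 2) := by field_simp; ring
      _ ≤ (8 * R)⁻¹ * |shannonEntropy x - (8 * R * c + ∑ i, 8 * R * a i * x i)| := by gcongr
      _ = |(8 * R)⁻¹ * shannonEntropy x - (c + ∑ i, a i * x i)| := by
        rw [← abs_of_pos (inv_pos.mpr hR₀), ← abs_mul, abs_of_pos (inv_pos.mpr hR₀)]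
        simp only [mul_assoc, ← mul_sum]
        congr 1
        field_simp

theorem exists_nat_inv_le_log_rpow_le {s : ℝ} (hs : 0 < s) (hs₁ : s ≤ 1) :
    ∃ n : ℕ, n ≠ 0 ∧ s⁻¹ ≤ Real.log n ∧ (n : ℝ) ^ s ≤ 6 := by
  have hexp : 1 ≤ Real.exp s⁻¹ := Real.one_le_exp (by positivity)
  have hlower : Real.exp s⁻¹ ≤ ⌈Real.exp s⁻¹⌉₊ := Nat.le_ceil _
  have hupper : (⌈Real.exp s⁻¹⌉₊ : ℝ) ≤ 2 * Real.exp s⁻¹ := by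
    linarith [Nat.ceil_lt_add_one (Real.exp_nonneg s⁻¹)]
  have hn : (0 : ℝ) < ⌈Real.exp s⁻¹⌉₊ := by linarith
  refine ⟨⌈Real.exp s⁻¹⌉₊, (Nat.cast_pos.mp hn).ne', (Real.le_log_iff_exp_le hn).mpr hlower, ?_⟩
  calc (⌈Real.exp s⁻¹⌉₊ : ℝ) ^ s ≤ (2 * Real.exp s⁻¹) ^ s := by gcongr
    _ = 2 ^ s * Real.exp 1 := by
        rw [Real.mul_rpow zero_le_two (Real.exp_nonneg _), ← Real.exp_mul, inv_mul_cancel₀ hs.ne']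
    _ ≤ 2 ^ (1 : ℝ) * 3 := by
        gcongr
        · exact one_le_two
        · exact Real.exp_one_lt_three.le
    _ = 6 := by norm_num

end LowerBound

theorem whitney_lp_small_p_general :
    ∃ d₁ d₂ : ℝ, 0 < d₁ ∧ 0 < d₂ ∧ ∀ p : ℝ, 1 < p → p ≤ 2 →
      ((∀ n : ℕ, ∀ f : (Fin n → ℝ) → ℝ, (∃ B, ∀ x ∈ lpBall n p, |f x| ≤ B) →
          diffBound 2 (lpBall n p) f 1 →
            ∃ (c : ℝ) (a : Fin n → ℝ), ∀ x ∈ lpBall n p,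
              |f x - (c + ∑ i, a i * x i)| ≤ d₂ * (p - 1)⁻¹) ∧
       (∃ n : ℕ, 1 ≤ n ∧
          ∃ f : (Fin n → ℝ) → ℝ, ContinuousOn f (lpBall n p) ∧ diffBound 2 (lpBall n p) f 1 ∧
            ∀ (c : ℝ) (a : Fin n → ℝ), ∃ x ∈ lpBall n p,
              d₁ * (p - 1)⁻¹ ≤ |f x - (c + ∑ i, a i * x i)|)) := by
  refine ⟨1 / 96, 8, by norm_num, by norm_num, fun p hp hp2 => ⟨fun n f ⟨B, hB⟩ hf => ?_, ?_⟩⟩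
  · have hinv : 1 ≤ (p - 1)⁻¹ := (one_le_inv₀ (by linarith)).mpr (by linarith)
    obtain ⟨c, a, h⟩ := exists_affine_abs_sub_le_of_diffBound_two hp hp2 hB hf
    exact ⟨c, a, fun x hx => (h x hx).trans (by linarith)⟩
  · obtain ⟨n, hn, hlog, hpow⟩ :=
      exists_nat_inv_le_log_rpow_le (sub_pos.mpr hp) (by linarith : p - 1 ≤ 1)
    have : NeZero n := ⟨hn⟩
    obtain ⟨f, hcont, hf, h⟩ :=
      exists_continuous_diffBound_two_le_abs_sub_affine hp.le (by norm_num) hpow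
    refine ⟨n, Nat.one_le_iff_ne_zero.mpr hn, f, hcont.continuousOn, hf, fun c a => ?_⟩
    obtain ⟨x, hx, hle⟩ := h c a
    exact ⟨x, hx, le_trans (by linarith) hle⟩

/-- Theorem 3.8(b): `d₁/(p−1) ≤ γ(p) = sup_n w₂(ℓ_pⁿ) ≤ d₂ (p−1)⁻¹(1+|log(p−1)|)`
for `1 < p ≤ 2`. -/
theorem whitney_lp_small_p :
    ∃ d₁ d₂ : ℝ, 0 < d₁ ∧ 0 < d₂ ∧ ∀ p : ℝ, 1 < p → p ≤ 2 →
      ((∀ n : ℕ, 1 ≤ n →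
          ∀ f : (Fin n → ℝ) → ℝ, ContinuousOn f (lpBall n p) → diffBound 2 (lpBall n p) f 1 →
            ∃ (c : ℝ) (a : Fin n → ℝ), ∀ x ∈ lpBall n p,
              |f x - (c + ∑ i, a i * x i)| ≤ d₂ * (p - 1)⁻¹ * (1 + |Real.log (p - 1)|)) ∧
       (∃ n : ℕ, 1 ≤ n ∧
          ∃ f : (Fin n → ℝ) → ℝ, ContinuousOn f (lpBall n p) ∧ diffBound 2 (lpBall n p) f 1 ∧
            ∀ (c : ℝ) (a : Fin n → ℝ), ∃ x ∈ lpBall n p,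
              d₁ * (p - 1)⁻¹ ≤ |f x - (c + ∑ i, a i * x i)|)) := by
  obtain ⟨d₁, d₂, hd₁, hd₂, h⟩ := whitney_lp_small_p_general
  refine ⟨d₁, d₂, hd₁, hd₂, fun p hp hp2 => ⟨fun n _ f hcont hf => ?_, (h p hp hp2).2⟩⟩
  obtain ⟨c, a, hle⟩ := (h p hp hp2).1 n f
    ((isCompact_lpBall hp.le).exists_bound_of_continuousOn hcont) hf
  have hbound : 0 ≤ d₂ * (p - 1)⁻¹ := mul_nonneg hd₂.le (inv_nonneg.mpr (sub_pos.mpr hp).le)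
  exact ⟨c, a, fun x hx => (hle x hx).trans <|
    le_mul_of_one_le_right hbound (le_add_of_nonneg_right (abs_nonneg _))⟩
end

section
/- There is an absolute constant c > 0 such that for every n ≥ 1 there exist a norm ‖·‖ on ℝⁿ with closed unit ball B and a continuous function f : ℝⁿ → ℝ with ω₃(f;B) ≤ 1 such that every polynomial φ on ℝⁿ of total degree at most 2 satisfies sup_{x∈B} |f(x) − φ(x)| ≥ c √n. (Lower bound of Theorem 4.1: w₃^{(s)}(n) ≥ c√n.) -/
open Finset

/-- A norm on `ι → ℝ`, given as a function with the norm axioms. -/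
def IsNormFn {ι : Type*} [Fintype ι] (N : (ι → ℝ) → ℝ) : Prop :=
  (∀ x, 0 ≤ N x) ∧ (∀ x, N x = 0 ↔ x = 0) ∧ (∀ (a : ℝ) (x), N (a • x) = |a| * N x) ∧
  (∀ x y, N (x + y) ≤ N x + N y)

/-!
Let `Y` be a subspace of a finite-dimensional normed space `Z`, let `π` be a projection of `Z` onto
`Y`, let `X = Z / Y`, and let `s : X → Z` be a continuous section with `‖s x‖ ≤ ‖x‖ + 1`. On
`X × Y*` consider `f (x, y) = y (π (s x))`. Since `s` lifts the identity, its second and third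
differences lie in `Y`, where `π` does not increase norms; hence `ω₃(f)` is bounded by an absolute
constant. A polynomial of degree two within `D` of `f` provides, through its mixed term, a linear
map `T : X → Y` within `D` of the odd part of `π ∘ s`, and then `z ↦ π z - T [z]` is a projection
onto `Y` of norm at most `D + 3`. So `f` is far from these polynomials if `Y` is badly complemented.

In `ℓ¹` of dimension `m = 2 ^ k` let `Y` be the eigenspace for the eigenvalue `√m` of a symmetric
Hadamard matrix `S` with nonnegative trace. Then `dim Y ≥ m / 2`, and as `S` has entries `±1`, every
projection `P` onto `Y` satisfies `√m * dim Y = tr (S P) ≤ m ‖P‖`.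
-/

open fwdDiff Module

section QuadraticFunctions

variable {E F : Type*} [AddCommGroup E] [Module ℝ E] [AddCommGroup F] [Module ℝ F]

/-- The real functions on `E` of the form constant + linear form + quadratic form, the
coordinate-free version of polynomials of total degree at most `2`. -/
def quadraticFunctions (E : Type*) [AddCommGroup E] [Module ℝ E] : Submodule ℝ (E → ℝ) where
  carrier := {φ | ∃ (c : ℝ) (l : E →ₗ[ℝ] ℝ) (Q : QuadraticForm ℝ E), ∀ x, φ x = c + l x + Q x}
  zero_mem' := ⟨0, 0, 0, fun x => by simp⟩
  add_mem' := by
    rintro φ ψ ⟨c, l, Q, hφ⟩ ⟨c', l', Q', hψ⟩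
    refine ⟨c + c', l + l', Q + Q', fun x => ?_⟩
    simp only [Pi.add_apply, hφ, hψ, LinearMap.add_apply, _root_.add_apply]
    ring
  smul_mem' := by
    rintro a φ ⟨c, l, Q, hφ⟩
    refine ⟨a * c, a • l, a • Q, fun x => ?_⟩
    simp only [Pi.smul_apply, hφ, LinearMap.smul_apply, _root_.smul_apply, smul_eq_mul]
    ring

theorem comp_linearMap_mem_quadraticFunctions {φ : F → ℝ} (hφ : φ ∈ quadraticFunctions F)
    (g : E →ₗ[ℝ] F) : φ ∘ g ∈ quadraticFunctions E := by
  obtain ⟨c, l, Q, hφ⟩ := hφ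
  exact ⟨c, l ∘ₗ g, Q.comp g, fun x => hφ (g x)⟩

theorem multiset_prod_mem_quadraticFunctions {s : Multiset (Dual ℝ E)} (hs : s.card ≤ 2) :
    (fun x => (s.map fun l => l x).prod) ∈ quadraticFunctions E := by
  obtain h | h | h : s.card = 0 ∨ s.card = 1 ∨ s.card = 2 := by omega
  · obtain rfl := Multiset.card_eq_zero.mp h
    exact ⟨1, 0, 0, by simp⟩
  · obtain ⟨l, rfl⟩ := Multiset.card_eq_one.mp h
    exact ⟨0, l, 0, by simp⟩
  · obtain ⟨l, l', rfl⟩ := Multiset.card_eq_two.mp h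
    exact ⟨0, 0, QuadraticMap.linMulLin l l', by simp⟩

theorem eval_mem_quadraticFunctions {ι : Type*} {P : MvPolynomial ι ℝ} (hP : P.totalDegree ≤ 2) :
    (fun x => MvPolynomial.eval x P) ∈ quadraticFunctions (ι → ℝ) := by
  have eval_eq_sum : (fun x => MvPolynomial.eval x P) = ∑ d ∈ P.support, P.coeff d • fun x =>
      ((d.toMultiset.map (LinearMap.proj (R := ℝ))).map fun l : Dual ℝ (ι → ℝ) => l x).prod := by
    ext x
    simp only [MvPolynomial.eval_eq, Finset.sum_apply, Pi.smul_apply, smul_eq_mul]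
    refine sum_congr rfl fun d _ => congrArg _ ?_
    rw [Multiset.map_map, Finsupp.toMultiset_map, Finsupp.prod_toMultiset,
      Finsupp.prod_mapDomain_index (fun _ => pow_zero _) (fun _ _ _ => pow_add _ _ _)]
    rfl
  rw [eval_eq_sum]
  refine sum_mem fun d hd => Submodule.smul_mem _ _ (multiset_prod_mem_quadraticFunctions ?_)
  rw [Multiset.card_map, Finsupp.card_toMultiset]
  exact (MvPolynomial.le_totalDegree hd).trans hP

theorem fwdDiff_iter_three_eq_zero_of_mem_quadraticFunctions {φ : E → ℝ}
    (hφ : φ ∈ quadraticFunctions E) (h : E) : Δ_[h] ^[3] φ = 0 := by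
  obtain ⟨c, l, Q, hφ⟩ := hφ
  ext x
  simp only [Function.iterate_succ, Function.iterate_zero, Function.comp_apply, id_eq, fwdDiff, hφ,
    map_add, QuadraticMap.map_add Q, QuadraticMap.polar_add_left, QuadraticMap.polar_self,
    Pi.zero_apply]
  ring

theorem exists_bilin_eq_mixedDiff {φ : E × F → ℝ} (hφ : φ ∈ quadraticFunctions (E × F)) :
    ∃ B : E →ₗ[ℝ] F →ₗ[ℝ] ℝ, ∀ x y,
      φ (x, y) - φ (x, -y) - φ (-x, y) + φ (-x, -y) = 4 * B x y := by
  obtain ⟨c, l, Q, hφ⟩ := hφ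
  refine ⟨Q.polarBilin.compl₁₂ (.inl ℝ E F) (.inr ℝ E F), fun x y => ?_⟩
  have decomp (x : E) (y : F) : (x, y) = LinearMap.inl ℝ E F x + LinearMap.inr ℝ E F y := by simp
  simp only [hφ, decomp, map_neg, map_add, QuadraticMap.map_add Q, QuadraticMap.map_neg,
    QuadraticMap.polar_neg_left, QuadraticMap.polar_neg_right, LinearMap.compl₁₂_apply,
    QuadraticMap.polarBilin_apply_apply]
  ring

end QuadraticFunctions

section ForwardDifferences

theorem norm_fwdDiff_iter_le {M G : Type*} [AddCommMonoid M] [SeminormedAddCommGroup G]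
    {f : M → G} {x h : M} {m : ℕ} {C : ℝ} (hf : ∀ j ≤ m, ‖f (x + j • h)‖ ≤ C) :
    ‖Δ_[h] ^[m] f x‖ ≤ 2 ^ m * C := by
  induction m generalizing x with
  | zero => simpa using hf 0 le_rfl
  | succ m ih =>
    have shifted : ‖Δ_[h] ^[m] f (x + h)‖ ≤ 2 ^ m * C := ih fun j hj => by
      simpa only [succ_nsmul', add_assoc] using hf (j + 1) (by omega)
    have unshifted : ‖Δ_[h] ^[m] f x‖ ≤ 2 ^ m * C := ih fun j hj => hf j (by omega)
    rw [Function.iterate_succ_apply', fwdDiff]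
    calc _ ≤ ‖Δ_[h] ^[m] f (x + h)‖ + ‖Δ_[h] ^[m] f x‖ := norm_sub_le _ _
      _ ≤ 2 ^ m * C + 2 ^ m * C := add_le_add shifted unshifted
      _ = 2 ^ (m + 1) * C := by ring

theorem exists_norm_fwdDiff_iter_le {M G : Type*} [AddCommMonoid M] [SeminormedAddCommGroup G]
    (f : M → G) (x h : M) (m : ℕ) :
    ∃ j ≤ m, ‖Δ_[h] ^[m] f x‖ ≤ 2 ^ m * ‖f (x + j • h)‖ := by
  obtain ⟨j, hj, hmax⟩ := exists_max_image (Finset.range (m + 1)) (fun j => ‖f (x + j • h)‖)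
    nonempty_range_add_one
  simp only [Finset.mem_range, Nat.lt_succ_iff] at hj hmax
  exact ⟨j, hj, norm_fwdDiff_iter_le hmax⟩

theorem map_fwdDiff_iter {M G H F : Type*} [AddCommMonoid M] [AddCommGroup G] [AddCommGroup H]
    [FunLike F G H] [AddMonoidHomClass F G H] (g : F) (f : M → G) (h x : M) (m : ℕ) :
    g (Δ_[h] ^[m] f x) = Δ_[h] ^[m] (g ∘ f) x := by
  simp only [fwdDiff_iter_eq_sum_shift, map_sum, map_zsmul, Function.comp_apply]

theorem fwdDiff_iter_id_eq_zero {M : Type*} [AddCommGroup M] (h : M) {m : ℕ} (hm : 2 ≤ m) :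
    Δ_[h] ^[m] (id : M → M) = 0 := by
  obtain ⟨m, rfl⟩ := Nat.exists_eq_add_of_le' hm
  have twice : Δ_[h] ^[2] (id : M → M) = fun _ => 0 := by
    ext x
    simp [fwdDiff]
  rw [Function.iterate_add_apply, twice]
  ext x
  simp [fwdDiff_iter_eq_sum_shift]

variable {E F : Type*} [AddCommGroup E] [Module ℝ E] [AddCommGroup F] [Module ℝ F]

theorem diffBound_iff_abs_fwdDiff_iter_le {m : ℕ} {K : Set E} {f : E → ℝ} {c : ℝ} :
    diffBound m K f c ↔ ∀ x h : E, (∀ j ≤ m, x + j • h ∈ K) → |Δ_[h] ^[m] f x| ≤ c := by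
  simp only [diffBound, fwdDiff_iter_eq_sum_shift, Nat.cast_smul_eq_nsmul, zsmul_eq_mul]
  push_cast
  rfl

theorem diffBound.comp_linearMap {m : ℕ} {K : Set F} {f : F → ℝ} {c : ℝ} (hf : diffBound m K f c)
    (g : E →ₗ[ℝ] F) : diffBound m (g ⁻¹' K) (f ∘ g) c := fun x h hx => by
  simpa only [Function.comp_apply, map_add, map_smul] using
    hf (g x) (g h) fun j hj => by simpa using hx j hj

theorem diffBound.mono {m : ℕ} {K L : Set E} {f : E → ℝ} {c : ℝ} (hf : diffBound m L f c)
    (hKL : K ⊆ L) : diffBound m K f c :=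
  fun x h hx => hf x h fun j hj => hKL (hx j hj)

theorem exists_abs_fwdDiff_iter_three_le {φ : E → ℝ} (hφ : φ ∈ quadraticFunctions E) (f : E → ℝ)
    (x h : E) : ∃ j ≤ 3, |Δ_[h] ^[3] f x| ≤ 8 * |f (x + j • h) - φ (x + j • h)| := by
  obtain ⟨j, hj, hle⟩ := exists_norm_fwdDiff_iter_le (f + (-1 : ℝ) • φ) x h 3
  rw [fwdDiff_iter_add, fwdDiff_iter_const_smul,
    fwdDiff_iter_three_eq_zero_of_mem_quadraticFunctions hφ, smul_zero, add_zero] at hle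
  exact ⟨j, hj, hle.trans_eq (by norm_num [sub_eq_add_neg])⟩

end ForwardDifferences

section WhitneyConstant

variable {E F : Type*} [NormedAddCommGroup E] [NormedSpace ℝ E]
  [NormedAddCommGroup F] [NormedSpace ℝ F]

/-- The Whitney constant `w₃` of the closed unit ball of `E` is at least `d`: some continuous `f`
with `ω₃(f) ≤ 1` on the ball differs from every polynomial of degree at most `2` by at least `d` at
some point of the ball. Requiring such a point rather than a bound on the supremum of `|f - φ|`
avoids suprema of unbounded sets. -/
def WhitneyThreeGE (E : Type*) [NormedAddCommGroup E] [NormedSpace ℝ E] (d : ℝ) : Prop :=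
  ∃ f : E → ℝ, Continuous f ∧ diffBound 3 {x | ‖x‖ ≤ 1} f 1 ∧
    ∀ φ ∈ quadraticFunctions E, ∃ x, ‖x‖ ≤ 1 ∧ d ≤ |f x - φ x|

theorem WhitneyThreeGE.mono {d d' : ℝ} (h : WhitneyThreeGE E d) (hd : d' ≤ d) :
    WhitneyThreeGE E d' := by
  obtain ⟨f, hcont, hdiff, hdist⟩ := h
  refine ⟨f, hcont, hdiff, fun φ hφ => ?_⟩
  obtain ⟨x, hx, hfar⟩ := hdist φ hφ
  exact ⟨x, hx, hd.trans hfar⟩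

theorem WhitneyThreeGE.of_diffBound {f : E → ℝ} {K d : ℝ} (hK : 0 < K) (hcont : Continuous f)
    (hdiff : diffBound 3 {x | ‖x‖ ≤ 1} f K)
    (hdist : ∀ φ ∈ quadraticFunctions E, ∃ x, ‖x‖ ≤ 1 ∧ d ≤ |f x - φ x|) :
    WhitneyThreeGE E (d / K) := by
  rw [diffBound_iff_abs_fwdDiff_iter_le] at hdiff
  refine ⟨K⁻¹ • f, hcont.const_smul _, diffBound_iff_abs_fwdDiff_iter_le.mpr fun x h hx => ?_,
    fun φ hφ => ?_⟩
  · rw [fwdDiff_iter_const_smul, Pi.smul_apply, smul_eq_mul, abs_mul, abs_of_pos (inv_pos.mpr hK),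
      inv_mul_le_iff₀ hK, mul_one]
    exact hdiff x h hx
  · obtain ⟨x, hx, hfar⟩ := hdist (K • φ) (Submodule.smul_mem _ K hφ)
    have rescaled : (K⁻¹ • f) x - φ x = (f x - (K • φ) x) / K := by
      simp only [Pi.smul_apply, smul_eq_mul]
      field_simp
    refine ⟨x, hx, ?_⟩
    rw [rescaled, abs_div, abs_of_pos hK]
    gcongr

theorem WhitneyThreeGE.prod {d : ℝ} (h : WhitneyThreeGE E d) : WhitneyThreeGE (E × F) d := by
  obtain ⟨f, hcont, hdiff, hdist⟩ := h
  refine ⟨f ∘ Prod.fst, hcont.comp continuous_fst,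
    (hdiff.comp_linearMap (.fst ℝ E F)).mono fun p hp => (norm_fst_le p).trans hp,
    fun φ hφ => ?_⟩
  obtain ⟨x, hx, hfar⟩ := hdist _ (comp_linearMap_mem_quadraticFunctions hφ (.inl ℝ E F))
  exact ⟨(x, 0), by simpa [Prod.norm_def] using hx, hfar⟩

theorem isNormFn_norm_comp {ι : Type*} [Fintype ι] {g : (ι → ℝ) →ₗ[ℝ] E}
    (hg : Function.Injective g) : IsNormFn fun x => ‖g x‖ :=
  ⟨fun _ => norm_nonneg _, fun x => by rw [norm_eq_zero, map_eq_zero_iff g hg],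
    fun a x => by simp only [map_smul, norm_smul, Real.norm_eq_abs],
    fun x y => by simpa only [map_add] using norm_add_le (g x) (g y)⟩

theorem WhitneyThreeGE.exists_isNormFn [FiniteDimensional ℝ E] {d : ℝ} (h : WhitneyThreeGE E d)
    {n : ℕ} (hn : finrank ℝ E ≤ n) :
    ∃ (N : (Fin n → ℝ) → ℝ) (f : (Fin n → ℝ) → ℝ), IsNormFn N ∧ Continuous f ∧
      diffBound 3 {x | N x ≤ 1} f 1 ∧ ∀ P : MvPolynomial (Fin n) ℝ, P.totalDegree ≤ 2 →
        ∃ x, N x ≤ 1 ∧ d ≤ |f x - MvPolynomial.eval x P| := by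
  obtain ⟨p, rfl⟩ := Nat.exists_eq_add_of_le hn
  obtain ⟨f, hcont, hdiff, hdist⟩ := h.prod (F := Fin p → ℝ)
  let e : (Fin (finrank ℝ E + p) → ℝ) ≃ₗ[ℝ] E × (Fin p → ℝ) :=
    LinearEquiv.ofFinrankEq _ _ (by simp)
  refine ⟨fun x => ‖e x‖, f ∘ e, isNormFn_norm_comp (g := e.toLinearMap) e.injective,
    hcont.comp e.toLinearMap.continuous_of_finiteDimensional,
    hdiff.comp_linearMap e.toLinearMap, fun P hP => ?_⟩
  obtain ⟨z, hz, hfar⟩ := hdist _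
    (comp_linearMap_mem_quadraticFunctions (eval_mem_quadraticFunctions hP) e.symm.toLinearMap)
  exact ⟨e.symm z, by simpa using hz, by simpa using hfar⟩

theorem diffBound_three_abs : diffBound 3 {x : ℝ | ‖x‖ ≤ 1} (fun x => |x|) 8 := by
  refine diffBound_iff_abs_fwdDiff_iter_le.mpr fun x h hx => ?_
  have abs_le_one (j : ℕ) (hj : j ≤ 3) : ‖(|x + j • h|)‖ ≤ 1 := by simpa using hx j hj
  exact (norm_fwdDiff_iter_le (f := fun x : ℝ => |x|) abs_le_one).trans (by norm_num)

theorem exists_abs_abs_sub_ge {φ : ℝ → ℝ} (hφ : φ ∈ quadraticFunctions ℝ) :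
    ∃ x : ℝ, ‖x‖ ≤ 1 ∧ 1 / 8 ≤ |(|x|) - φ x| := by
  obtain ⟨j, hj, hle⟩ := exists_abs_fwdDiff_iter_three_le hφ (fun x => |x|) (-1 / 2) (1 / 2)
  have third_diff : Δ_[(1 / 2 : ℝ)] ^[3] (fun x => |x|) (-1 / 2) = -1 := by
    norm_num [fwdDiff, abs_of_pos, abs_of_neg]
  rw [third_diff, abs_neg, abs_one] at hle
  refine ⟨-1 / 2 + j • (1 / 2), ?_, by linarith⟩
  have : (j : ℝ) ≤ 3 := by exact_mod_cast hj
  rw [Real.norm_eq_abs, abs_le, nsmul_eq_mul]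
  constructor <;> linarith [j.cast_nonneg (α := ℝ)]

theorem whitneyThreeGE_real : WhitneyThreeGE ℝ (1 / 8 / 8) :=
  .of_diffBound (by norm_num) continuous_abs diffBound_three_abs fun _ => exists_abs_abs_sub_ge

end WhitneyConstant

section DualPairing

variable {X W : Type*} [NormedAddCommGroup W] [NormedSpace ℝ W]

/-- The function `(x, y) ↦ y (a x)` on `X × W*`, linear in the functional `y`: its distance to the
quadratic polynomials measures how far `a` is from being linear. -/
def pairingWith (a : X → W) (p : X × StrongDual ℝ W) : ℝ := p.2 (a p.1)

theorem continuous_pairingWith [TopologicalSpace X] {a : X → W} (ha : Continuous a) :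
    Continuous (pairingWith a) := by
  unfold pairingWith
  fun_prop

theorem fwdDiff_iter_three_pairingWith [AddCommGroup X] (a : X → W) (p q : X × StrongDual ℝ W) :
    Δ_[q] ^[3] (pairingWith a) p =
      p.2 (Δ_[q.1] ^[3] a p.1) + 3 * q.2 (Δ_[q.1] ^[2] a (p.1 + q.1)) := by
  simp only [Function.iterate_succ, Function.iterate_zero, Function.comp_apply, id_eq, fwdDiff,
    pairingWith, Prod.fst_add, Prod.snd_add, map_sub, _root_.add_apply]
  ring

theorem exists_linearMap_of_bilin {V : Type*} [AddCommGroup V] [Module ℝ V]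
    [FiniteDimensional ℝ W] (B : V →ₗ[ℝ] StrongDual ℝ W →ₗ[ℝ] ℝ) :
    ∃ T : V →ₗ[ℝ] W, ∀ x y, y (T x) = B x y := by
  let dualEquiv := LinearMap.toContinuousLinearMap (𝕜 := ℝ) (E := W) (F' := ℝ)
  refine ⟨(evalEquiv ℝ W).symm.toLinearMap ∘ₗ dualEquiv.toLinearMap.dualMap ∘ₗ B, fun x y => ?_⟩
  exact apply_evalEquiv_symm_apply ℝ W y.toLinearMap (dualEquiv.toLinearMap.dualMap (B x))

variable [NormedAddCommGroup X] [NormedSpace ℝ X]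

theorem diffBound_pairingWith {a : X → W} {C₂ C₃ : ℝ}
    (h₂ : ∀ x h : X, (∀ j ≤ 2, ‖x + j • h‖ ≤ 1) → ‖Δ_[h] ^[2] a x‖ ≤ C₂)
    (h₃ : ∀ x h : X, (∀ j ≤ 3, ‖x + j • h‖ ≤ 1) → ‖Δ_[h] ^[3] a x‖ ≤ C₃) :
    diffBound 3 {p | ‖p‖ ≤ 1} (pairingWith a) (C₃ + 6 * C₂) := by
  refine diffBound_iff_abs_fwdDiff_iter_le.mpr fun p q hpq => ?_
  have base_le (j : ℕ) (hj : j ≤ 3) : ‖p.1 + j • q.1‖ ≤ 1 := (norm_fst_le _).trans (hpq j hj)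
  have functional_le : ‖p.2‖ ≤ 1 := (norm_snd_le p).trans (by simpa using hpq 0 (by norm_num))
  have step_le : ‖q.2‖ ≤ 2 := calc
    ‖q.2‖ = ‖(p + 1 • q).2 - p.2‖ := by simp
    _ ≤ ‖(p + 1 • q).2‖ + ‖p.2‖ := norm_sub_le _ _
    _ ≤ 1 + 1 := add_le_add ((norm_snd_le _).trans (hpq 1 (by norm_num))) functional_le
    _ = 2 := by norm_num
  have third := p.2.le_of_opNorm_le_of_le functional_le (h₃ p.1 q.1 base_le)
  have second := q.2.le_of_opNorm_le_of_le step_le (h₂ (p.1 + q.1) q.1 fun j hj => by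
    simpa only [succ_nsmul', add_assoc] using base_le (j + 1) (by omega))
  rw [fwdDiff_iter_three_pairingWith]
  rw [Real.norm_eq_abs] at third second
  calc _ ≤ |p.2 (Δ_[q.1] ^[3] a p.1)| + |3 * q.2 (Δ_[q.1] ^[2] a (p.1 + q.1))| := abs_add_le _ _
    _ ≤ 1 * C₃ + 3 * (2 * C₂) := by
      rw [abs_mul, abs_of_pos (three_pos (α := ℝ))]
      gcongr
    _ = C₃ + 6 * C₂ := by ring

/-- The odd part of `a` is the part seen by the mixed difference in `x` and `y`, which turns a
quadratic polynomial into a bilinear form. -/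
theorem exists_linearMap_near_odd_part [FiniteDimensional ℝ W] {a : X → W} {D : ℝ}
    {φ : X × StrongDual ℝ W → ℝ} (hφ : φ ∈ quadraticFunctions (X × StrongDual ℝ W))
    (hclose : ∀ p, ‖p‖ ≤ 1 → |pairingWith a p - φ p| ≤ D) :
    ∃ T : X →ₗ[ℝ] W, ∀ x, ‖x‖ ≤ 1 → ‖(2⁻¹ : ℝ) • (a x - a (-x)) - T x‖ ≤ D := by
  obtain ⟨B, hB⟩ := exists_bilin_eq_mixedDiff hφ
  obtain ⟨T, hT⟩ := exists_linearMap_of_bilin B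
  refine ⟨T, fun x hx => ?_⟩
  obtain ⟨y, hy, hyT : y _ = ‖(2⁻¹ : ℝ) • (a x - a (-x)) - T x‖⟩ :=
    exists_dual_vector'' ℝ ((2⁻¹ : ℝ) • (a x - a (-x)) - T x)
  have close_neg {u : X} {v : StrongDual ℝ W} (hu : ‖u‖ ≤ 1) (hv : ‖v‖ ≤ 1) :
      |v (a u) - φ (u, v)| ≤ D ∧ |v (a u) + φ (u, -v)| ≤ D := by
    refine ⟨hclose (u, v) (max_le hu hv), ?_⟩
    have := hclose (u, -v) (max_le hu (by rwa [norm_neg]))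
    rwa [pairingWith, _root_.neg_apply, ← neg_add', abs_neg] at this
  obtain ⟨pos_pos, pos_neg⟩ := close_neg hx hy
  obtain ⟨neg_pos, neg_neg⟩ := close_neg (u := -x) (by rwa [norm_neg]) hy
  have mixed := hB x y
  rw [← hT] at mixed
  rw [← hyT, map_sub, map_smul, map_sub, smul_eq_mul]
  linarith [abs_le.mp pos_pos, abs_le.mp pos_neg, abs_le.mp neg_pos, abs_le.mp neg_neg]

end DualPairing

section QuotientSection

variable {Z : Type*} [NormedAddCommGroup Z] [NormedSpace ℝ Z] {Y : Submodule ℝ Z}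

variable (Y) in
theorem exists_continuous_section_mkQ [IsClosed (Y : Set Z)] [FiniteDimensional ℝ (Z ⧸ Y)] :
    ∃ s : Z ⧸ Y → Z, Continuous s ∧ (∀ x, Y.mkQ (s x) = x) ∧ ∀ x, ‖s x‖ ≤ ‖x‖ + 1 := by
  obtain ⟨L, hL⟩ := Y.mkQ.exists_rightInverse_of_surjective Y.range_mkQ
  replace hL (x : Z ⧸ Y) : Y.mkQ (L x) = x := LinearMap.congr_fun hL x
  have L_cont : Continuous L := L.continuous_of_finiteDimensional
  have convex_near_norm (x : Z ⧸ Y) : Convex ℝ ({z | Y.mkQ z = x} ∩ {z | ‖z‖ < ‖x‖ + 1}) :=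
    ((convex_singleton x).linear_preimage Y.mkQ).inter
      (by simpa only [Metric.ball, dist_zero_right] using convex_ball (0 : Z) (‖x‖ + 1))
  obtain ⟨s, hs⟩ := exists_continuous_forall_mem_convex_of_local convex_near_norm fun x => by
    obtain ⟨z, hz : Y.mkQ z = x, hzx⟩ := Submodule.Quotient.norm_mk_lt x one_pos
    have near : ∀ᶠ x' in nhds x, ‖L x' + (z - L x)‖ < ‖x'‖ + 1 :=
      ContinuousAt.eventually_lt (by fun_prop) (by fun_prop) (by simpa using hzx)
    refine ⟨_, near, fun x' => L x' + (z - L x), by fun_prop, fun x' hx' => ⟨?_, hx'⟩⟩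
    change Y.mkQ (L x' + (z - L x)) = x'
    rw [map_add, map_sub, hL, hL, hz, sub_self, add_zero]
  exact ⟨s, s.continuous, fun x => (hs x).1, fun x => (hs x).2.le⟩

variable {π : Z →L[ℝ] Y} {s : Z ⧸ Y → Z}

/-- From order two on, differences of `s` lie in `Y`, where `π` costs no norm. -/
theorem norm_fwdDiff_iter_projection_comp_section_le (hπ : ∀ y : Y, π y = y)
    (hs : ∀ x, Y.mkQ (s x) = x) (hnorm : ∀ x, ‖s x‖ ≤ ‖x‖ + 1) {m : ℕ} (hm : 2 ≤ m) {x h : Z ⧸ Y}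
    (hx : ∀ j ≤ m, ‖x + j • h‖ ≤ 1) : ‖Δ_[h] ^[m] (π ∘ s) x‖ ≤ 2 ^ m * 2 := by
  have mem : Δ_[h] ^[m] s x ∈ Y := by
    rw [← Submodule.Quotient.mk_eq_zero, ← Y.mkQ_apply, map_fwdDiff_iter,
      show Y.mkQ ∘ s = id from funext hs, fwdDiff_iter_id_eq_zero h hm, Pi.zero_apply]
  rw [← map_fwdDiff_iter, hπ ⟨_, mem⟩]
  exact norm_fwdDiff_iter_le fun j hj => (hnorm _).trans (by linarith [hx j hj])

theorem exists_projection_norm_le [IsClosed (Y : Set Z)] [FiniteDimensional ℝ (Z ⧸ Y)]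
    (hπ : ∀ y : Y, π y = y) (hs : ∀ x, Y.mkQ (s x) = x) (hnorm : ∀ x, ‖s x‖ ≤ ‖x‖ + 1)
    {T : Z ⧸ Y →ₗ[ℝ] Y} {D : ℝ}
    (hT : ∀ x, ‖x‖ ≤ 1 → ‖(2⁻¹ : ℝ) • ((π ∘ s) x - (π ∘ s) (-x)) - T x‖ ≤ D) :
    ∃ P : Z →L[ℝ] Y, (∀ y : Y, P y = y) ∧ ‖P‖ ≤ D + 3 := by
  have odd_part_le {x : Z ⧸ Y} (hx : ‖x‖ ≤ 1) : ‖(2⁻¹ : ℝ) • (s x - s (-x))‖ ≤ 2 := by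
    have hs_pos : ‖s x‖ ≤ 2 := (hnorm x).trans (by linarith)
    have hs_neg : ‖s (-x)‖ ≤ 2 := (hnorm (-x)).trans (by rw [norm_neg]; linarith)
    rw [norm_smul, norm_inv, Real.norm_ofNat]
    linarith [norm_sub_le (s x) (s (-x))]
  refine ⟨π - T.toContinuousLinearMap ∘L Y.mkQL, fun y => ?_, ?_⟩
  · simp [hπ, (Submodule.Quotient.mk_eq_zero Y).mpr y.2]
  have hD : 0 ≤ D := (norm_nonneg _).trans (hT 0 (by simp))
  refine ContinuousLinearMap.opNorm_le_of_unit_norm (by positivity) fun z hz => ?_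
  have hx : ‖Y.mkQ z‖ ≤ 1 := (Submodule.Quotient.norm_mk_le Y z).trans hz.le
  set x := Y.mkQ z with hxz
  set σ := (2⁻¹ : ℝ) • (s x - s (-x)) with hσ
  have σ_le : ‖σ‖ ≤ 2 := odd_part_le hx
  have mem : z - σ ∈ Y := by
    rw [← Submodule.Quotient.mk_eq_zero, ← Y.mkQ_apply, map_sub, map_smul, map_sub, hs, hs, ← hxz]
    module
  calc ‖π z - T x‖ = ‖π (z - σ) + (π σ - T x)‖ := by rw [map_sub]; congr 1; abel
    _ ≤ ‖π (z - σ)‖ + ‖π σ - T x‖ := norm_add_le _ _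
    _ ≤ 3 + D := by
      refine add_le_add ?_ (by simpa only [hσ, map_smul, map_sub, Function.comp] using hT x hx)
      rw [hπ ⟨_, mem⟩, Submodule.coe_norm, Submodule.coe_mk]
      linarith [norm_sub_le z σ]
    _ = D + 3 := add_comm _ _

theorem whitneyThreeGE_quotient_prod_dual {Z : Type*} [NormedAddCommGroup Z] [NormedSpace ℝ Z]
    {Y : Submodule ℝ Z} [IsClosed (Y : Set Z)] [FiniteDimensional ℝ Z] {D : ℝ}
    (hY : ∀ P : Z →L[ℝ] Y, (∀ y : Y, P y = y) → D + 3 < ‖P‖) :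
    WhitneyThreeGE ((Z ⧸ Y) × StrongDual ℝ Y) (D / 64) := by
  obtain ⟨π, hπ⟩ := Submodule.ClosedComplemented.of_finiteDimensional Y
  obtain ⟨s, s_cont, hs, hnorm⟩ := exists_continuous_section_mkQ Y
  have hdiff := diffBound_pairingWith
    (fun x h => norm_fwdDiff_iter_projection_comp_section_le hπ hs hnorm le_rfl)
    (fun x h => norm_fwdDiff_iter_projection_comp_section_le hπ hs hnorm (Nat.le_succ 2))
  rw [show (2 ^ 3 * 2 + 6 * (2 ^ 2 * 2) : ℝ) = 64 by norm_num] at hdiff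
  refine .of_diffBound (by norm_num) (continuous_pairingWith (π.continuous.comp s_cont)) hdiff
    fun φ hφ => ?_
  by_contra! hclose
  obtain ⟨T, hT⟩ := exists_linearMap_near_odd_part hφ fun p hp => (hclose p hp).le
  obtain ⟨P, hP, hPnorm⟩ := exists_projection_norm_le hπ hs hnorm hT
  exact (hY P hP).not_ge hPnorm

theorem finrank_quotient_prod_dual {Z : Type*} [NormedAddCommGroup Z] [NormedSpace ℝ Z]
    [FiniteDimensional ℝ Z] (Y : Submodule ℝ Z) :
    finrank ℝ ((Z ⧸ Y) × StrongDual ℝ Y) = finrank ℝ Z := by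
  have finrank_dual : finrank ℝ (StrongDual ℝ Y) = finrank ℝ Y :=
    LinearMap.toContinuousLinearMap.finrank_eq.symm.trans Subspace.dual_finrank_eq
  rw [finrank_prod, finrank_dual, Y.finrank_quotient_add_finrank]

end QuotientSection

section Eigenspace

theorem finrank_le_two_mul_finrank_eigenspace {V : Type*} [AddCommGroup V] [Module ℝ V]
    [FiniteDimensional ℝ V] {S : End ℝ V} {r : ℝ} (hr : 0 < r) (hS : S * S = r ^ 2 • 1)
    (htrace : 0 ≤ LinearMap.trace ℝ V S) : finrank ℝ V ≤ 2 * finrank ℝ (S.eigenspace r) := by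
  have sq_apply (x : V) : S (S x) = r ^ 2 • x := LinearMap.congr_fun hS x
  have isProj : LinearMap.IsProj (S.eigenspace r) ((2⁻¹ : ℝ) • (1 + r⁻¹ • S)) := by
    refine ⟨fun x => ?_, fun x hx => ?_⟩
    · rw [End.mem_eigenspace_iff]
      simp only [LinearMap.smul_apply, LinearMap.add_apply, End.one_apply, map_smul, map_add,
        sq_apply, smul_add, smul_smul]
      rw [add_comm]
      congr 2 <;> field_simp
    · rw [End.mem_eigenspace_iff] at hx
      simp only [LinearMap.smul_apply, LinearMap.add_apply, End.one_apply, hx]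
      rw [inv_smul_smul₀ hr.ne', ← two_smul ℝ x, inv_smul_smul₀ two_ne_zero]
  have trace_eq := isProj.trace
  rw [map_smul, map_add, map_smul, LinearMap.trace_one, smul_eq_mul, smul_eq_mul] at trace_eq
  have : 0 ≤ r⁻¹ * LinearMap.trace ℝ V S := by positivity
  have real_le : (finrank ℝ V : ℝ) ≤ 2 * finrank ℝ (S.eigenspace r) := by linarith
  exact_mod_cast real_le

end Eigenspace

section EllOne

variable {ι : Type*} [Fintype ι]

theorem trace_piLp_eq_sum [DecidableEq ι] (p : ENNReal) (A : End ℝ (PiLp p fun _ : ι => ℝ)) :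
    LinearMap.trace ℝ _ A = ∑ i, A (PiLp.single p i 1) i := by
  simp [LinearMap.trace_eq_matrix_trace ℝ (PiLp.basisFun p ℝ ι), Matrix.trace,
    LinearMap.toMatrix_apply]

theorem mul_finrank_le_card_mul_norm_projection {S : End ℝ (PiLp 1 fun _ : ι => ℝ)}
    (hS : ∀ z i, |S z i| ≤ ‖z‖) {Y : Submodule ℝ (PiLp 1 fun _ : ι => ℝ)} {r : ℝ}
    (hY : ∀ y ∈ Y, S y = r • y) {P : (PiLp 1 fun _ : ι => ℝ) →L[ℝ] Y} (hP : ∀ y : Y, P y = y) :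
    r * finrank ℝ Y ≤ Fintype.card ι * ‖P‖ := by
  classical
  have isProj : LinearMap.IsProj Y (Y.subtype ∘ₗ P.toLinearMap) :=
    ⟨fun x => (P x).2, fun y hy => congrArg Subtype.val (hP ⟨y, hy⟩)⟩
  have comp_eq : S ∘ₗ Y.subtype ∘ₗ P.toLinearMap = r • (Y.subtype ∘ₗ P.toLinearMap) :=
    LinearMap.ext fun z => hY _ (P z).2
  calc r * finrank ℝ Y = LinearMap.trace ℝ _ (S ∘ₗ Y.subtype ∘ₗ P.toLinearMap) := by
        rw [comp_eq, map_smul, isProj.trace, smul_eq_mul]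
    _ = ∑ i, S (P (PiLp.single 1 i 1)) i := trace_piLp_eq_sum 1 _
    _ ≤ ∑ _i : ι, ‖P‖ := by
      refine sum_le_sum fun i _ => (le_abs_self _).trans ((hS _ i).trans ?_)
      simpa using P.le_opNorm (PiLp.single 1 i 1)
    _ = Fintype.card ι * ‖P‖ := by rw [sum_const, card_univ, nsmul_eq_mul]

end EllOne

section Hadamard

open scoped Kronecker

theorem exists_isHadamard_isHermitian_trace_nonneg (k : ℕ) :
    ∃ H : Matrix (Fin (2 ^ k)) (Fin (2 ^ k)) ℝ, H.IsHadamard ∧ H.IsHermitian ∧ 0 ≤ H.trace := by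
  induction k with
  | zero =>
    rw [pow_zero]
    exact ⟨(1 : Matrix (Fin 1) (Fin 1) ℝ),
      ⟨fun i j => by rw [Subsingleton.elim i j, Matrix.one_apply_eq]; exact one_mem _,
        by simp, by simp⟩,
      Matrix.isHermitian_one, by simp⟩
  | succ k ih =>
    obtain ⟨H, hadamard, hermitian, -⟩ := ih
    let S : Matrix (Fin 2) (Fin 2) ℝ := !![1, 1; 1, -1]
    have S_hermitian : S.IsHermitian := by
      ext i j
      fin_cases i <;> fin_cases j <;> rfl
    have S_sq : S * S = (Fintype.card (Fin 2) : ℝ) • 1 := by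
      ext i j
      fin_cases i <;> fin_cases j <;> norm_num [S]
    have S_hadamard : S.IsHadamard := by
      refine ⟨fun i j => ?_, by rw [S_hermitian.eq, S_sq], by rw [S_hermitian.eq, S_sq]⟩
      fin_cases i <;> fin_cases j <;> simp [S, Unitary.mem_iff]
    have S_trace : S.trace = 0 := by simp [S, Matrix.trace]
    have kronecker_hermitian : (H ⊗ₖ S).IsHermitian := by
      rw [Matrix.IsHermitian, Matrix.conjTranspose_kronecker, hermitian.eq, S_hermitian.eq]
    rw [pow_succ]
    refine ⟨(H ⊗ₖ S).reindex finProdFinEquiv finProdFinEquiv,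
      (hadamard.kronecker S_hadamard).reindex _ _, kronecker_hermitian.submatrix _, ?_⟩
    have trace_reindex : ((H ⊗ₖ S).reindex finProdFinEquiv finProdFinEquiv).trace =
        (H ⊗ₖ S).trace := finProdFinEquiv.symm.sum_comp (H ⊗ₖ S).diag
    rw [trace_reindex, Matrix.trace_kronecker, S_trace, mul_zero]

variable {ι : Type*} [Fintype ι] [DecidableEq ι] {H : Matrix ι ι ℝ}

theorem abs_toLpLin_apply_le (hH : H.IsHadamard) (z : PiLp 1 fun _ : ι => ℝ) (i : ι) :
    |Matrix.toLpLin 1 1 H z i| ≤ ‖z‖ := by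
  have abs_entry (j : ι) : |H i j| = 1 :=
    (abs_eq zero_le_one).mpr <| by
      simpa [Unitary.mem_iff, mul_self_eq_one_iff] using hH.apply_mem i j
  calc |Matrix.toLpLin 1 1 H z i| = |∑ j, H i j * z j| := by
        simp [Matrix.toLpLin_apply, Matrix.mulVec, dotProduct]
    _ ≤ ∑ j, |H i j * z j| := abs_sum_le_sum_abs _ _
    _ = ‖z‖ := by simp [abs_mul, abs_entry, PiLp.norm_eq_of_nat 1 Nat.cast_one.symm]

theorem exists_submodule_sqrt_card_le_norm_projection [Nonempty ι] (hH : H.IsHadamard)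
    (hHerm : H.IsHermitian) (htrace : 0 ≤ H.trace) :
    ∃ Y : Submodule ℝ (PiLp 1 fun _ : ι => ℝ), ∀ P : (PiLp 1 fun _ : ι => ℝ) →L[ℝ] Y,
      (∀ y : Y, P y = y) → √(Fintype.card ι) / 2 ≤ ‖P‖ := by
  set n : ℝ := (Fintype.card ι : ℝ)
  have hn : 0 < n := Nat.cast_pos.mpr Fintype.card_pos
  let S : End ℝ (PiLp 1 fun _ : ι => ℝ) := Matrix.toLpLin 1 1 H
  have S_sq : S * S = √n ^ 2 • 1 := by
    have : H * H = n • 1 := by simpa only [hHerm.eq] using hH.mul_conjTranspose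
    rw [Real.sq_sqrt hn.le, End.mul_eq_comp, ← Matrix.toLpLin_mul_same, this, map_smul,
      Matrix.toLpLin_one]
    rfl
  have S_trace : LinearMap.trace ℝ _ S = H.trace := by
    simp [S, Matrix.toLpLin_eq_toLin, Matrix.trace_toLin_eq]
  have finrank_ge : n ≤ 2 * finrank ℝ (S.eigenspace √n) := by
    have := finrank_le_two_mul_finrank_eigenspace (Real.sqrt_pos.mpr hn) S_sq (S_trace ▸ htrace)
    rw [finrank_eq_card_basis (PiLp.basisFun 1 ℝ ι)] at this
    simp only [n]
    exact_mod_cast this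
  refine ⟨S.eigenspace √n, fun P hP => ?_⟩
  have := mul_finrank_le_card_mul_norm_projection (abs_toLpLin_apply_le hH)
    (fun y hy => End.mem_eigenspace_iff.mp hy) hP
  refine le_of_mul_le_mul_left ?_ hn
  calc n * (√n / 2) = √n * n / 2 := by ring
    _ ≤ √n * (2 * finrank ℝ (S.eigenspace √n)) / 2 := by gcongr
    _ = √n * finrank ℝ (S.eigenspace √n) := by ring
    _ ≤ n * ‖P‖ := this

end Hadamard

theorem sqrt_le_two_mul_sqrt_two_pow_log (n : ℕ) : √(n : ℝ) ≤ 2 * √(2 ^ Nat.log 2 n) := by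
  have lt_pow : (n : ℝ) < 2 ^ (Nat.log 2 n + 1) := mod_cast Nat.lt_pow_succ_log_self one_lt_two n
  refine Real.sqrt_le_iff.mpr ⟨by positivity, ?_⟩
  rw [mul_pow, Real.sq_sqrt (by positivity)]
  linarith [pow_succ (2 : ℝ) (Nat.log 2 n), pow_pos (two_pos (α := ℝ)) (Nat.log 2 n)]

/-- Lower bound of Theorem 4.1: `w₃^{(s)}(n) ≥ c √n`. -/
theorem whitney_three_symmetric_lower_bound :
    ∃ c : ℝ, 0 < c ∧ ∀ n : ℕ, 1 ≤ n →
      ∃ (N : (Fin n → ℝ) → ℝ) (f : (Fin n → ℝ) → ℝ), IsNormFn N ∧ Continuous f ∧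
        diffBound 3 {x | N x ≤ 1} f 1 ∧
        ∀ P : MvPolynomial (Fin n) ℝ, P.totalDegree ≤ 2 →
          ∃ x, N x ≤ 1 ∧ c * Real.sqrt n ≤ |f x - MvPolynomial.eval x P| := by
  refine ⟨1 / 2048, by norm_num, fun n hn => ?_⟩
  obtain small | large := lt_or_ge (√(n : ℝ)) 32
  · exact (whitneyThreeGE_real.mono (by linarith)).exists_isNormFn (by simpa using hn)
  obtain ⟨H, hadamard, hermitian, trace_nonneg⟩ :=
    exists_isHadamard_isHermitian_trace_nonneg (Nat.log 2 n)
  obtain ⟨Y, hY⟩ := exists_submodule_sqrt_card_le_norm_projection hadamard hermitian trace_nonneg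
  have := Y.closed_of_finiteDimensional
  have sqrt_le : √(n : ℝ) ≤ 2 * √(Fintype.card (Fin (2 ^ Nat.log 2 n))) := by
    simpa using sqrt_le_two_mul_sqrt_two_pow_log n
  have bound := whitneyThreeGE_quotient_prod_dual (D := √(n : ℝ) / 4 - 4) fun P hP => by
    linarith [hY P hP]
  refine (bound.mono (by linarith)).exists_isNormFn ?_
  rw [finrank_quotient_prod_dual, finrank_eq_card_basis (PiLp.basisFun 1 ℝ _), Fintype.card_fin]
  exact Nat.pow_log_le_self 2 (by omega)
end
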